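/- arXiv:2001.06185 — 6 statements merged into one kernel-verified Lean document; each statement's English description precedes it below -/
import Mathlib

section
/- Let ℰ, 𝒜 ∈ ℝ^{N×N} with ℰ invertible and the pencil λℰ − 𝒜 c-stable, let ℬ ∈ ℝ^{N×m}, and let Ω = [−ω₂, −ω₁] ∪ [ω₁, ω₂] with 0 ≤ ω₁ < ω₂ < ∞. Define F_Ω = (1/2π) ∫_Ω (iωℰ − 𝒜)^{-1} dω and P_Ω = (1/2π) ∫_Ω (iωℰ − 𝒜)^{-1} ℬ ℬᵀ (−iωℰ − 𝒜)^{-ᵀ} dω. Then F_Ω is a real matrix, P_Ω is a real symmetric positive semidefinite matrix, and P_Ω satisfies the frequency-limited Lyapunov equation 𝒜 P_Ω ℰᵀ + ℰ P_Ω 𝒜ᵀ + ℬ_Ω ℬᵀ + ℬ ℬ_Ωᵀ = 0, where ℬ_Ω = ℰ F_Ω ℬ. -/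
open Matrix MeasureTheory

noncomputable section

/-- A matrix pencil `λℰ − 𝒜` (with real square matrices) is c-stable if all complex `λ`
with `det (λℰ − 𝒜) = 0` lie in the open left complex half-plane. -/
def CStablePencil {N : ℕ} (ℰ 𝒜 : Matrix (Fin N) (Fin N) ℝ) : Prop :=
  ∀ μ : ℂ, (μ • ℰ.map Complex.ofReal - 𝒜.map Complex.ofReal).det = 0 → μ.re < 0

/-- Complexification of a real matrix. -/
def toC {a b : ℕ} (M : Matrix (Fin a) (Fin b) ℝ) : Matrix (Fin a) (Fin b) ℂ :=
  M.map Complex.ofReal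

/-!
Write `R(z) = (zE − A)⁻¹`, `F = (1/2π) ∫ R(iω) dω` and `P = (1/2π) ∫ G(ω) dω` with
`G(ω) = R(iω) B Bᵀ R(−iω)ᵀ`. From `A R(z) = z E R(z) − 1` one gets
`A G(ω) Eᵀ + E G(ω) Aᵀ = −(E R(iω) B Bᵀ + B Bᵀ (E R(−iω))ᵀ)`: the terms carrying a factor `±iω`
cancel. Integrating over a range of frequencies invariant under `ω ↦ −ω` turns both resolvents on
the right into `F`, which is the Lyapunov equation. The same reflection gives `Pᵀ = P`, while for
real data `G(ω) = (R(iω) B) (R(iω) B)ᴴ` is positive semidefinite; so `P` is both symmetric and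
Hermitian, hence real. Likewise `Fᴴ = Fᵀ` because `R(iω)ᴴ = R(−iω)ᵀ`.
-/

section Integral

open scoped Pointwise in
theorem isNegInvariant_restrict {G : Type*} [MeasurableSpace G] [InvolutiveNeg G] [MeasurableNeg G]
    (μ : Measure G) [μ.IsNegInvariant] {S : Set G} (hneg : -S = S) :
    (μ.restrict S).IsNegInvariant where
  neg_eq_self := by
    have hpres : MeasurePreserving Neg.neg (μ.restrict (-S)) (μ.restrict S) :=
      (Measure.measurePreserving_neg μ).restrict_preimage_emb
        (MeasurableEquiv.neg G).measurableEmbedding S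
    rw [hneg] at hpres
    exact hpres.map_eq

open scoped Matrix.Norms.L2Operator

variable {m n α : Type*} [Fintype m] [Fintype n] [DecidableEq n] [MeasurableSpace α]
  {μ : Measure α}

theorem of_integral_apply {f : α → Matrix m n ℂ} (hf : Integrable f μ) :
    Matrix.of (fun i j => ∫ x, f x i j ∂μ) = ∫ x, f x ∂μ := by
  ext i j
  exact (entryLinearMap ℂ ℂ i j).toContinuousLinearMap.integral_comp_comm hf

theorem integral_transpose [DecidableEq m] (f : α → Matrix m n ℂ) :
    ∫ x, (f x)ᵀ ∂μ = (∫ x, f x ∂μ)ᵀ :=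
  (transposeLinearEquiv m n ℂ ℂ).toContinuousLinearEquiv.integral_comp_comm f

-- In the L2 operator norm square matrices form a C⋆-algebra, so the cone of positive semidefinite
-- matrices is closed and Bochner integration is monotone for the Loewner order.
open scoped ComplexOrder MatrixOrder in
theorem integral_posSemidef {f : α → Matrix n n ℂ} (hf : ∀ x, (f x).PosSemidef) :
    (∫ x, f x ∂μ).PosSemidef :=
  (integral_nonneg fun x => (hf x).nonneg).posSemidef

end Integral

section RealPart

open scoped ComplexOrder in
theorem posSemidef_map_re {n 𝕜 : Type*} [RCLike 𝕜] {M : Matrix n n 𝕜} (hM : M.PosSemidef) :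
    (M.map RCLike.re).PosSemidef := by
  refine ⟨.ext fun i j => ?_, fun v => ?_⟩
  · simpa using congrArg RCLike.re (hM.isHermitian.apply i j)
  · have h := (RCLike.nonneg_iff.mp (hM.2 (v.mapRange RCLike.ofReal RCLike.ofReal_zero))).1
    have hsupp : (v.mapRange RCLike.ofReal (RCLike.ofReal_zero (K := 𝕜))).support = v.support :=
      Finsupp.support_mapRange_of_injective _ v RCLike.ofReal_injective
    simpa [Finsupp.sum, hsupp] using h

theorem im_apply_eq_zero_of_conjTranspose_eq_transpose {m n : Type*} {M : Matrix m n ℂ}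
    (hM : Mᴴ = Mᵀ) (i : m) (j : n) : (M i j).im = 0 :=
  Complex.conj_eq_iff_im.mp (congrFun₂ hM j i)

theorem conjTranspose_map_ofReal {m n : Type*} (M : Matrix m n ℝ) :
    (M.map Complex.ofReal)ᴴ = (M.map Complex.ofReal)ᵀ := by
  ext i j
  exact Complex.conj_ofReal _

end RealPart

section Resolvent

variable {n R : Type*} [Fintype n] [DecidableEq n]

/-- The resolvent `(zE − A)⁻¹` of the matrix pencil `zE − A`. It is the junk value `0` at the
points where the determinant of the pencil is not a unit. -/
def pencilResolvent [CommRing R] (E A : Matrix n n R) (z : R) : Matrix n n R :=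
  (z • E - A)⁻¹

theorem mul_pencilResolvent [CommRing R] {E A : Matrix n n R} {z : R}
    (hz : IsUnit (z • E - A).det) :
    A * pencilResolvent E A z = z • (E * pencilResolvent E A z) - 1 := by
  have h : (z • E - A) * pencilResolvent E A z = 1 := mul_nonsing_inv _ hz
  rw [Matrix.sub_mul, Matrix.smul_mul] at h
  rw [← h, sub_sub_cancel]

theorem pencilResolvent_lyapunov [CommRing R] {E A : Matrix n n R} {z : R}
    (hz : IsUnit (z • E - A).det) (hz' : IsUnit (-z • E - A).det) (Q : Matrix n n R) :
    A * (pencilResolvent E A z * Q * (pencilResolvent E A (-z))ᵀ) * Eᵀ +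
        E * (pencilResolvent E A z * Q * (pencilResolvent E A (-z))ᵀ) * Aᵀ =
      -(E * pencilResolvent E A z * Q + Q * (E * pencilResolvent E A (-z))ᵀ) := by
  set X := pencilResolvent E A z
  set Y := pencilResolvent E A (-z)
  calc A * (X * Q * Yᵀ) * Eᵀ + E * (X * Q * Yᵀ) * Aᵀ
    _ = A * X * Q * (E * Y)ᵀ + E * X * Q * (A * Y)ᵀ := by
      simp only [transpose_mul, Matrix.mul_assoc]
    _ = (z • (E * X) - 1) * Q * (E * Y)ᵀ + E * X * Q * (-z • (E * Y) - 1)ᵀ := by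
      rw [mul_pencilResolvent hz, mul_pencilResolvent hz']
    _ = -(E * X * Q + Q * (E * Y)ᵀ) := by
      simp only [transpose_sub, transpose_smul, transpose_neg, transpose_one, Matrix.sub_mul,
        Matrix.mul_sub, Matrix.smul_mul, Matrix.mul_smul, Matrix.mul_neg, Matrix.one_mul,
        Matrix.mul_one, neg_smul]
      abel

theorem continuousOn_pencilResolvent [Field R] [TopologicalSpace R] [IsTopologicalDivisionRing R]
    (E A : Matrix n n R) :
    ContinuousOn (pencilResolvent E A) {z | (z • E - A).det ≠ 0} := by
  intro z hz
  have hpencil : Continuous fun z : R => z • E - A := by fun_prop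
  have hinv : ContinuousAt Ring.inverse (z • E - A).det := by
    rw [Ring.inverse_eq_inv']
    exact continuousAt_inv₀ hz
  exact (ContinuousAt.comp (f := fun z : R => z • E - A) (continuousAt_matrix_inv _ hinv)
    hpencil.continuousAt).continuousWithinAt

theorem conjTranspose_pencilResolvent_map_ofReal (E A : Matrix n n ℝ) (z : ℂ) :
    (pencilResolvent (E.map Complex.ofReal) (A.map Complex.ofReal) z)ᴴ =
      (pencilResolvent (E.map Complex.ofReal) (A.map Complex.ofReal) (star z))ᵀ := by
  simp only [pencilResolvent, conjTranspose_nonsing_inv, transpose_nonsing_inv, conjTranspose_sub,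
    conjTranspose_smul, transpose_sub, transpose_smul, conjTranspose_map_ofReal]

end Resolvent

section Gramian

open scoped Pointwise

variable {m n : Type*} [Fintype m] [Fintype n] [DecidableEq n]

/-- The frequency-limited resolvent integral `F_S = (1/2π) ∫_S (iωE − A)⁻¹ dω` of a matrix pencil.
The integral is taken entrywise, so that no norm on matrices is involved. -/
def frequencyLimitedResolvent (E A : Matrix n n ℂ) (S : Set ℝ) : Matrix n n ℂ :=
  Matrix.of fun i j => ((1 / (2 * Real.pi) : ℝ) : ℂ) *
    ∫ ω in S, pencilResolvent E A (Complex.I * (ω : ℂ)) i j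

/-- The integrand `(iωE − A)⁻¹ B Bᵀ (−iωE − A)⁻ᵀ` of the controllability Gramian. -/
def gramianIntegrand (E A : Matrix n n ℂ) (B : Matrix n m ℂ) (ω : ℝ) : Matrix n n ℂ :=
  pencilResolvent E A (Complex.I * (ω : ℂ)) * B * Bᵀ *
    (pencilResolvent E A (-(Complex.I * (ω : ℂ))))ᵀ

/-- The frequency-limited controllability Gramian
`P_S = (1/2π) ∫_S (iωE − A)⁻¹ B Bᵀ (−iωE − A)⁻ᵀ dω`, integrated entrywise. The data may be complex;
for real data the second factor `Bᵀ (−iωE − A)⁻ᵀ` is the conjugate transpose of the first. -/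
def frequencyLimitedGramian (E A : Matrix n n ℂ) (B : Matrix n m ℂ) (S : Set ℝ) :
    Matrix n n ℂ :=
  Matrix.of fun i j => ((1 / (2 * Real.pi) : ℝ) : ℂ) * ∫ ω in S, gramianIntegrand E A B ω i j

section Reflection

theorem gramianIntegrand_neg (E A : Matrix n n ℂ) (B : Matrix n m ℂ) (ω : ℝ) :
    gramianIntegrand E A B (-ω) = (gramianIntegrand E A B ω)ᵀ := by
  simp only [gramianIntegrand, Complex.ofReal_neg, mul_neg, neg_neg, transpose_mul,
    transpose_transpose, Matrix.mul_assoc]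

theorem transpose_frequencyLimitedGramian (E A : Matrix n n ℂ) (B : Matrix n m ℂ) {S : Set ℝ}
    (hneg : -S = S) :
    (frequencyLimitedGramian E A B S)ᵀ = frequencyLimitedGramian E A B S := by
  have := isNegInvariant_restrict volume hneg
  ext i j
  simp only [frequencyLimitedGramian, transpose_apply, of_apply]
  rw [← integral_neg_eq_self]
  simp only [gramianIntegrand_neg, transpose_apply]

theorem conjTranspose_frequencyLimitedResolvent (E A : Matrix n n ℝ) {S : Set ℝ}
    (hneg : -S = S) :
    (frequencyLimitedResolvent (E.map Complex.ofReal) (A.map Complex.ofReal) S)ᴴ =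
      (frequencyLimitedResolvent (E.map Complex.ofReal) (A.map Complex.ofReal) S)ᵀ := by
  have := isNegInvariant_restrict volume hneg
  set R := pencilResolvent (E.map Complex.ofReal) (A.map Complex.ofReal) with hR
  have hconj (ω : ℝ) (i j : n) :
      star (R (Complex.I * (ω : ℂ)) i j) = R (Complex.I * ((-ω : ℝ) : ℂ)) i j := by
    simpa using congrFun₂ (conjTranspose_pencilResolvent_map_ofReal E A (Complex.I * (ω : ℂ))) j i
  ext i j
  simp only [frequencyLimitedResolvent, conjTranspose_apply, transpose_apply, of_apply, star_mul',
    ← hR]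
  congr 1
  · exact Complex.conj_ofReal _
  · calc star (∫ ω in S, R (Complex.I * (ω : ℂ)) j i)
      _ = ∫ ω in S, star (R (Complex.I * (ω : ℂ)) j i) := integral_conj.symm
      _ = ∫ ω in S, R (Complex.I * ((-ω : ℝ) : ℂ)) j i := by simp only [hconj]
      _ = ∫ ω in S, R (Complex.I * (ω : ℂ)) j i :=
        integral_neg_eq_self (fun ω : ℝ => R (Complex.I * (ω : ℂ)) j i) _

end Reflection

open scoped Matrix.Norms.L2Operator

variable {E A : Matrix n n ℂ} {S : Set ℝ}

theorem continuousOn_pencilResolvent_axis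
    (hreg : ∀ ω ∈ S, ((Complex.I * (ω : ℂ)) • E - A).det ≠ 0) :
    ContinuousOn (fun ω : ℝ => pencilResolvent E A (Complex.I * (ω : ℂ))) S :=
  (continuousOn_pencilResolvent E A).comp (by fun_prop) hreg

theorem det_neg_axis_ne_zero (hneg : -S = S)
    (hreg : ∀ ω ∈ S, ((Complex.I * (ω : ℂ)) • E - A).det ≠ 0) {ω : ℝ} (hω : ω ∈ S) :
    ((-(Complex.I * (ω : ℂ))) • E - A).det ≠ 0 := by
  have hω' : -ω ∈ S := hneg.ge hω
  simpa only [Complex.ofReal_neg, mul_neg] using hreg (-ω) hω'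

theorem continuousOn_pencilResolvent_neg_axis (hneg : -S = S)
    (hreg : ∀ ω ∈ S, ((Complex.I * (ω : ℂ)) • E - A).det ≠ 0) :
    ContinuousOn (fun ω : ℝ => pencilResolvent E A (-(Complex.I * (ω : ℂ)))) S :=
  (continuousOn_pencilResolvent E A).comp (by fun_prop) fun _ => det_neg_axis_ne_zero hneg hreg

theorem integrableOn_gramianIntegrand (hS : IsCompact S) (hneg : -S = S)
    (hreg : ∀ ω ∈ S, ((Complex.I * (ω : ℂ)) • E - A).det ≠ 0) (B : Matrix n m ℂ) :
    IntegrableOn (gramianIntegrand E A B) S := by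
  suffices hcont : ContinuousOn (gramianIntegrand E A B) S from hcont.integrableOn_compact hS
  have hleft := continuousOn_pencilResolvent_axis hreg
  have hright := continuousOn_pencilResolvent_neg_axis hneg hreg
  simp only [continuousOn_iff_continuous_domRestrict] at hleft hright ⊢
  exact ((hleft.matrix_mul continuous_const).matrix_mul continuous_const).matrix_mul
    hright.matrix_transpose

theorem frequencyLimitedResolvent_eq_smul_integral (hS : IsCompact S)
    (hreg : ∀ ω ∈ S, ((Complex.I * (ω : ℂ)) • E - A).det ≠ 0) :
    frequencyLimitedResolvent E A S =
      (1 / (2 * Real.pi)) • ∫ ω in S, pencilResolvent E A (Complex.I * (ω : ℂ)) := by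
  rw [← of_integral_apply ((continuousOn_pencilResolvent_axis hreg).integrableOn_compact hS)]
  ext i j
  exact Complex.real_smul.symm

theorem frequencyLimitedGramian_eq_smul_integral (hS : IsCompact S) (hneg : -S = S)
    (hreg : ∀ ω ∈ S, ((Complex.I * (ω : ℂ)) • E - A).det ≠ 0) (B : Matrix n m ℂ) :
    frequencyLimitedGramian E A B S =
      (1 / (2 * Real.pi)) • ∫ ω in S, gramianIntegrand E A B ω := by
  rw [← of_integral_apply (integrableOn_gramianIntegrand hS hneg hreg B)]
  ext i j
  exact Complex.real_smul.symm

section PosSemidef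

open scoped ComplexOrder

theorem gramianIntegrand_posSemidef (E A : Matrix n n ℝ) (B : Matrix n m ℝ) (ω : ℝ) :
    (gramianIntegrand (E.map Complex.ofReal) (A.map Complex.ofReal) (B.map Complex.ofReal)
      ω).PosSemidef := by
  set X := pencilResolvent (E.map Complex.ofReal) (A.map Complex.ofReal) (Complex.I * (ω : ℂ))
    with hX
  have hconj : (pencilResolvent (E.map Complex.ofReal) (A.map Complex.ofReal)
      (-(Complex.I * (ω : ℂ))))ᵀ = Xᴴ := by
    rw [hX, conjTranspose_pencilResolvent_map_ofReal]
    simp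
  rw [gramianIntegrand, hconj, ← hX, ← conjTranspose_map_ofReal, Matrix.mul_assoc,
    ← conjTranspose_mul]
  exact posSemidef_self_mul_conjTranspose _

theorem frequencyLimitedGramian_posSemidef {E A : Matrix n n ℝ} (hS : IsCompact S)
    (hneg : -S = S)
    (hreg : ∀ ω ∈ S,
      ((Complex.I * (ω : ℂ)) • E.map Complex.ofReal - A.map Complex.ofReal).det ≠ 0)
    (B : Matrix n m ℝ) :
    (frequencyLimitedGramian (E.map Complex.ofReal) (A.map Complex.ofReal)
      (B.map Complex.ofReal) S).PosSemidef := by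
  rw [frequencyLimitedGramian_eq_smul_integral hS hneg hreg]
  exact (integral_posSemidef (gramianIntegrand_posSemidef E A B)).smul (by positivity)

end PosSemidef

theorem integral_gramianIntegrand_lyapunov (hS : IsCompact S) (hneg : -S = S)
    (hreg : ∀ ω ∈ S, ((Complex.I * (ω : ℂ)) • E - A).det ≠ 0) (B : Matrix n m ℂ) :
    A * (∫ ω in S, gramianIntegrand E A B ω) * Eᵀ +
        E * (∫ ω in S, gramianIntegrand E A B ω) * Aᵀ =
      -(E * (∫ ω in S, pencilResolvent E A (Complex.I * (ω : ℂ))) * (B * Bᵀ) +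
        B * Bᵀ * (E * ∫ ω in S, pencilResolvent E A (Complex.I * (ω : ℂ)))ᵀ) := by
  have := isNegInvariant_restrict volume hneg
  have hG := integrableOn_gramianIntegrand hS hneg hreg B
  set R : ℝ → Matrix n n ℂ := fun ω => pencilResolvent E A (Complex.I * (ω : ℂ))
  have hR : IntegrableOn R S := (continuousOn_pencilResolvent_axis hreg).integrableOn_compact hS
  have hpointwise : ∀ ω ∈ S,
      A * gramianIntegrand E A B ω * Eᵀ + E * gramianIntegrand E A B ω * Aᵀ =
        -(E * R ω * (B * Bᵀ) + B * Bᵀ * (E * R (-ω))ᵀ) := fun ω hω => by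
    simpa only [gramianIntegrand, R, Complex.ofReal_neg, mul_neg, Matrix.mul_assoc] using
      pencilResolvent_lyapunov (hreg ω hω).isUnit (det_neg_axis_ne_zero hneg hreg hω).isUnit
        (B * Bᵀ)
  have hRneg : IntegrableOn (fun ω => (E * R (-ω))ᵀ) S :=
    (transposeLinearEquiv n n ℂ ℂ).toLinearMap.toContinuousLinearMap.integrable_comp
      (hR.const_mul E).comp_neg
  calc
    _ = ∫ ω in S, (A * gramianIntegrand E A B ω * Eᵀ + E * gramianIntegrand E A B ω * Aᵀ) := by
      rw [integral_add ((hG.const_mul A).mul_const Eᵀ) ((hG.const_mul E).mul_const Aᵀ),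
        integral_mul_const_of_integrable (hG.const_mul A),
        integral_mul_const_of_integrable (hG.const_mul E),
        integral_const_mul_of_integrable hG, integral_const_mul_of_integrable hG]
    _ = ∫ ω in S, -(E * R ω * (B * Bᵀ) + B * Bᵀ * (E * R (-ω))ᵀ) :=
      setIntegral_congr_fun hS.measurableSet hpointwise
    _ = _ := by
      rw [integral_neg, integral_add ((hR.const_mul E).mul_const (B * Bᵀ)) (hRneg.const_mul _),
        integral_mul_const_of_integrable (hR.const_mul E), integral_const_mul_of_integrable hR,
        integral_const_mul_of_integrable hRneg, integral_transpose,
        integral_neg_eq_self (fun ω => E * R ω), integral_const_mul_of_integrable hR]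

theorem frequencyLimitedGramian_lyapunov (hS : IsCompact S) (hneg : -S = S)
    (hreg : ∀ ω ∈ S, ((Complex.I * (ω : ℂ)) • E - A).det ≠ 0) (B : Matrix n m ℂ) :
    A * frequencyLimitedGramian E A B S * Eᵀ + E * frequencyLimitedGramian E A B S * Aᵀ +
      (E * frequencyLimitedResolvent E A S * B) * Bᵀ +
      B * (E * frequencyLimitedResolvent E A S * B)ᵀ = 0 := by
  have hintegral := congrArg ((1 / (2 * Real.pi)) • ·)
    (integral_gramianIntegrand_lyapunov hS hneg hreg B)
  simp only [smul_add, smul_neg] at hintegral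
  rw [frequencyLimitedGramian_eq_smul_integral hS hneg hreg,
    frequencyLimitedResolvent_eq_smul_integral hS hreg]
  simp only [Matrix.mul_smul, Matrix.smul_mul, transpose_smul, hintegral]
  simp only [transpose_mul, Matrix.mul_assoc]
  abel

open scoped ComplexOrder in
theorem frequency_limited_controllability_gramian_general (E A : Matrix n n ℝ)
    (B : Matrix n m ℝ) (hS : IsCompact S) (hneg : -S = S)
    (hreg : ∀ ω ∈ S,
      ((Complex.I * (ω : ℂ)) • E.map Complex.ofReal - A.map Complex.ofReal).det ≠ 0) :
    let E' := E.map Complex.ofReal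
    let A' := A.map Complex.ofReal
    let B' := B.map Complex.ofReal
    let F := frequencyLimitedResolvent E' A' S
    let P := frequencyLimitedGramian E' A' B' S
    (∀ i j, (F i j).im = 0) ∧
    (∀ i j, (P i j).im = 0) ∧
    (P.map Complex.re).PosSemidef ∧
    A' * P * E'ᵀ + E' * P * A'ᵀ + (E' * F * B') * B'ᵀ + B' * (E' * F * B')ᵀ = 0 := by
  intro E' A' B' F P
  have hpos := frequencyLimitedGramian_posSemidef hS hneg hreg B
  have hPreal : Pᴴ = Pᵀ :=
    hpos.isHermitian.eq.trans (transpose_frequencyLimitedGramian E' A' B' hneg).symm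
  exact ⟨im_apply_eq_zero_of_conjTranspose_eq_transpose
      (conjTranspose_frequencyLimitedResolvent E A hneg),
    im_apply_eq_zero_of_conjTranspose_eq_transpose hPreal, posSemidef_map_re hpos,
    frequencyLimitedGramian_lyapunov hS hneg hreg B'⟩

end Gramian

/-- For a c-stable pencil with invertible `ℰ` and the symmetric frequency range
`Ω = [−ω₂, −ω₁] ∪ [ω₁, ω₂]`, the matrix `F_Ω = (1/2π) ∫_Ω (iωℰ − 𝒜)⁻¹ dω` is real, the
frequency-limited controllability Gramian
`P_Ω = (1/2π) ∫_Ω (iωℰ − 𝒜)⁻¹ ℬ ℬᵀ (−iωℰ − 𝒜)⁻ᵀ dω` is real symmetric positive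
semidefinite, and `P_Ω` satisfies the frequency-limited Lyapunov equation
`𝒜 P_Ω ℰᵀ + ℰ P_Ω 𝒜ᵀ + ℬ_Ω ℬᵀ + ℬ ℬ_Ωᵀ = 0` with `ℬ_Ω = ℰ F_Ω ℬ`. -/
theorem frequency_limited_controllability_gramian {N m : ℕ}
    (ℰ 𝒜 : Matrix (Fin N) (Fin N) ℝ) (ℬ : Matrix (Fin N) (Fin m) ℝ)
    (hE : IsUnit ℰ) (hstab : CStablePencil ℰ 𝒜)
    (ω₁ ω₂ : ℝ) (hω₁ : 0 ≤ ω₁) (hω₁₂ : ω₁ < ω₂)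
    (FΩ PΩ : Matrix (Fin N) (Fin N) ℂ)
    (hF : FΩ = Matrix.of fun i j =>
      ((1 / (2 * Real.pi) : ℝ) : ℂ) *
        ∫ ω in Set.Icc (-ω₂) (-ω₁) ∪ Set.Icc ω₁ ω₂,
          ((((Complex.I * (ω : ℂ)) • toC ℰ - toC 𝒜)⁻¹) i j))
    (hP : PΩ = Matrix.of fun i j =>
      ((1 / (2 * Real.pi) : ℝ) : ℂ) *
        ∫ ω in Set.Icc (-ω₂) (-ω₁) ∪ Set.Icc ω₁ ω₂,
          ((((Complex.I * (ω : ℂ)) • toC ℰ - toC 𝒜)⁻¹ * toC ℬ * (toC ℬ)ᵀ *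
            (((-(Complex.I * (ω : ℂ))) • toC ℰ - toC 𝒜)⁻¹)ᵀ) i j)) :
    (∀ i j, (FΩ i j).im = 0) ∧
    (∀ i j, (PΩ i j).im = 0) ∧
    (Matrix.of fun i j => (PΩ i j).re : Matrix (Fin N) (Fin N) ℝ).PosSemidef ∧
    toC 𝒜 * PΩ * (toC ℰ)ᵀ + toC ℰ * PΩ * (toC 𝒜)ᵀ +
      (toC ℰ * FΩ * toC ℬ) * (toC ℬ)ᵀ + toC ℬ * (toC ℰ * FΩ * toC ℬ)ᵀ = 0 := by
  subst hF hP
  exact frequency_limited_controllability_gramian_general ℰ 𝒜 ℬ (isCompact_Icc.union isCompact_Icc)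
    (by simp [Set.union_comm]) fun ω _ hdet => by simpa using hstab _ hdet
end
end

section
/- Let M, E, K ∈ ℝ^{n×n} be symmetric positive definite and let 0 < γ < λ_min(E(M + (1/4)E K^{-1} E)^{-1}). Then the matrix ℰ = [[K, γM], [γM, M]] is symmetric positive definite, and for 𝒜 = [[−γK, K − γE], [−K, −E + γM]] the matrix 𝒜 + 𝒜ᵀ = [[−2γK, −γE], [−γE, −2E + 2γM]] is symmetric negative definite. -/
open Matrix

noncomputable section

/-!
Put `S = M + (1/4) E K⁻¹ E` and let `D = -(𝒜 + 𝒜ᴴ)` be the dissipation matrix. The upper left block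
of `D` is `2γK`, with Schur complement `2 (E - γ S)`. Since `E S⁻¹` is similar to a Hermitian matrix
congruent to `E`, the eigenvalue bound on `γ` says exactly that `E - γ S`, hence `D`, is positive
definite. Restricting the form of `D` to the vectors `(v, -γ v)` cancels all terms in `E` and leaves
`2γ (K - γ² M)`, which is `2γ` times the Schur complement of `M` in `ℰ`; so `ℰ` is positive definite
as well.
-/

theorem det_map_sub_smul_one_eq_zero_of_mem_spectrum {n F R : Type*} [Fintype n] [DecidableEq n]
    [Field F] [CommRing R] (f : F →+* R) {A : Matrix n n F} {μ : F} (hμ : μ ∈ spectrum F A) :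
    (A.map f - f μ • (1 : Matrix n n R)).det = 0 := by
  have hdet : (A - μ • (1 : Matrix n n F)).det = 0 := by
    simpa only [spectrum.mem_iff, IsUnit.sub_iff, Algebra.algebraMap_eq_smul_one,
      isUnit_iff_isUnit_det, isUnit_iff_ne_zero, not_not] using hμ
  have hmap : A.map f - f μ • (1 : Matrix n n R) = f.mapMatrix (A - μ • (1 : Matrix n n F)) := by
    rw [map_sub, RingHom.mapMatrix_apply, RingHom.mapMatrix_apply,
      Matrix.map_smul' f _ _ (map_mul f), Matrix.map_one f (map_zero f) (map_one f)]
  rw [hmap, ← RingHom.map_det, hdet, map_zero]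

section

open scoped ComplexOrder

variable {𝕜 m n : Type*} [RCLike 𝕜]

theorem posDef_smul_iff {A : Matrix n n 𝕜} {c : ℝ} (hc : 0 < c) : (c • A).PosDef ↔ A.PosDef :=
  ⟨fun h ↦ by simpa only [inv_smul_smul₀ hc.ne'] using h.smul (inv_pos.mpr hc), fun h ↦ h.smul hc⟩

theorem posDef_submatrix_equiv {A : Matrix n n 𝕜} (e : m ≃ n) :
    (A.submatrix e e).PosDef ↔ A.PosDef :=
  ⟨fun h ↦ by simpa using h.submatrix e.symm.injective, fun h ↦ h.submatrix e.injective⟩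

theorem posDef_fromBlocks_iff_schur₁₁ [Fintype m] [DecidableEq m] [Finite n] {A : Matrix m m 𝕜}
    (hA : A.PosDef) (B : Matrix m n 𝕜) (D : Matrix n n 𝕜) :
    (fromBlocks A B Bᴴ D).PosDef ↔ (D - Bᴴ * A⁻¹ * B).PosDef := by
  classical
  have := Fintype.ofFinite n
  let _ : Invertible A := hA.isUnit.invertible
  have hdet : (fromBlocks A B Bᴴ D).det = A.det * (D - Bᴴ * A⁻¹ * B).det := by
    rw [det_fromBlocks₁₁, invOf_eq_nonsing_inv]
  have hpsd := PosDef.fromBlocks₁₁ B D hA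
  constructor <;> intro h
  · exact (hpsd.mp h.posSemidef).posDef_iff_det_ne_zero.mpr
      (right_ne_zero_of_mul (hdet ▸ h.det_pos.ne'))
  · exact (hpsd.mpr h.posSemidef).posDef_iff_det_ne_zero.mpr
      (hdet ▸ mul_ne_zero hA.det_pos.ne' h.det_pos.ne')

theorem posDef_fromBlocks_iff_schur₂₂ [Finite m] [Fintype n] [DecidableEq n] (A : Matrix m m 𝕜)
    (B : Matrix m n 𝕜) {D : Matrix n n 𝕜} (hD : D.PosDef) :
    (fromBlocks A B Bᴴ D).PosDef ↔ (A - B * D⁻¹ * Bᴴ).PosDef := by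
  rw [← posDef_submatrix_equiv (Equiv.sumComm n m), Equiv.sumComm_apply,
    fromBlocks_submatrix_sum_swap_sum_swap]
  simpa only [conjTranspose_conjTranspose] using posDef_fromBlocks_iff_schur₁₁ hD Bᴴ A

/-- The energy matrix `ℰ` of the realization `ℰ ż = 𝒜 z`, `z = (x, ẋ)`, of the second-order system
`M ẍ + E ẋ + K x = 0`. For `γ = 0`, `z ↦ zᴴ ℰ z` is twice the mechanical energy; the coupling `γ M`
makes the dissipation strict. -/
def energyMatrix (γ : ℝ) (M K : Matrix n n 𝕜) : Matrix (n ⊕ n) (n ⊕ n) 𝕜 :=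
  fromBlocks K (γ • M) (γ • M) M

/-- The state matrix `𝒜` of the realization `ℰ ż = 𝒜 z`, `z = (x, ẋ)`, of the second-order system
`M ẍ + E ẋ + K x = 0`: the first block row is `K ẋ = K ẋ` plus `γ` times the system, the second is
the system plus `γ M ẋ = γ M ẋ`. -/
def stateMatrix (γ : ℝ) (M E K : Matrix n n 𝕜) : Matrix (n ⊕ n) (n ⊕ n) 𝕜 :=
  fromBlocks (-(γ • K)) (K - γ • E) (-K) (-E + γ • M)

/-- The dissipation matrix `-(𝒜 + 𝒜ᴴ)`, with its blocks computed for Hermitian `M`, `E`, `K`; its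
quadratic form is the rate at which the form of `ℰ` decays along solutions of `ℰ ż = 𝒜 z`. -/
def dissipationMatrix (γ : ℝ) (M E K : Matrix n n 𝕜) : Matrix (n ⊕ n) (n ⊕ n) 𝕜 :=
  fromBlocks ((2 * γ) • K) (γ • E) (γ • E) ((2 : ℝ) • E - (2 * γ) • M)

theorem neg_dissipationMatrix (γ : ℝ) (M E K : Matrix n n 𝕜) :
    -dissipationMatrix γ M E K =
      fromBlocks (-((2 * γ) • K)) (-(γ • E)) (-(γ • E)) (-(2 : ℝ) • E + (2 * γ) • M) := by
  rw [dissipationMatrix, fromBlocks_neg]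
  congr 1
  module

theorem stateMatrix_add_conjTranspose {M E K : Matrix n n 𝕜} (hM : M.IsHermitian)
    (hE : E.IsHermitian) (hK : K.IsHermitian) (γ : ℝ) :
    stateMatrix γ M E K + (stateMatrix γ M E K)ᴴ = -dissipationMatrix γ M E K := by
  rw [neg_dissipationMatrix, stateMatrix, fromBlocks_conjTranspose, fromBlocks_add]
  simp only [conjTranspose_neg, conjTranspose_sub, conjTranspose_add, conjTranspose_smul,
    star_trivial, hM.eq, hE.eq, hK.eq]
  congr 1 <;> module

theorem posDef_energyMatrix_iff [Finite n] {M : Matrix n n 𝕜} (hM : M.PosDef) (K : Matrix n n 𝕜)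
    (γ : ℝ) : (energyMatrix γ M K).PosDef ↔ (K - γ ^ 2 • M).PosDef := by
  classical
  have := Fintype.ofFinite n
  have hγM : (γ • M)ᴴ = γ • M := by rw [conjTranspose_smul, star_trivial, hM.isHermitian.eq]
  have hSchur : K - (γ • M) * M⁻¹ * (γ • M) = K - γ ^ 2 • M := by
    rw [smul_mul_assoc, smul_mul_smul_comm,
      mul_nonsing_inv _ ((isUnit_iff_isUnit_det _).mp hM.isUnit), one_mul, sq]
  have h := posDef_fromBlocks_iff_schur₂₂ K (γ • M) hM
  rwa [hγM, hSchur] at h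

theorem conjTranspose_mul_dissipationMatrix_mul [Fintype n] [DecidableEq n] (γ : ℝ)
    (M E K : Matrix n n 𝕜) :
    (fromRows (1 : Matrix n n 𝕜) (-γ • (1 : Matrix n n 𝕜)))ᴴ * dissipationMatrix γ M E K *
      fromRows (1 : Matrix n n 𝕜) (-γ • (1 : Matrix n n 𝕜)) = (2 * γ) • (K - γ ^ 2 • M) := by
  rw [dissipationMatrix, Matrix.mul_assoc, fromBlocks_mul_fromRows,
    conjTranspose_fromRows_eq_fromCols_conjTranspose, fromCols_mul_fromRows]
  simp only [conjTranspose_one, conjTranspose_smul, star_trivial, smul_mul_assoc, mul_smul_comm,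
    one_mul, mul_one]
  module

theorem posDef_sub_sq_smul_of_posDef_dissipationMatrix [Finite n] {M E K : Matrix n n 𝕜} {γ : ℝ}
    (hγ : 0 < γ) (hD : (dissipationMatrix γ M E K).PosDef) : (K - γ ^ 2 • M).PosDef := by
  classical
  have := Fintype.ofFinite n
  have hinj : Function.Injective
      (fromRows (1 : Matrix n n 𝕜) (-γ • (1 : Matrix n n 𝕜))).mulVec := fun v w hvw ↦ by
    rw [fromRows_mulVec, fromRows_mulVec] at hvw
    simpa only [one_mulVec] using (Sum.elim_eq_iff.mp hvw).1
  have h := hD.conjTranspose_mul_mul_same hinj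
  rwa [conjTranspose_mul_dissipationMatrix_mul, posDef_smul_iff (by positivity)] at h

variable [Fintype n] [DecidableEq n]

theorem posDef_dissipationMatrix_iff {E K : Matrix n n 𝕜} (hE : E.IsHermitian) (hK : K.PosDef)
    {γ : ℝ} (hγ : 0 < γ) (M : Matrix n n 𝕜) :
    (dissipationMatrix γ M E K).PosDef ↔
      (E - γ • (M + (1 / 4 : ℝ) • (E * K⁻¹ * E))).PosDef := by
  have hγE : (γ • E)ᴴ = γ • E := by rw [conjTranspose_smul, star_trivial, hE.eq]
  have hKinv : ((2 * γ) • K)⁻¹ = (2 * γ)⁻¹ • K⁻¹ := by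
    refine inv_eq_right_inv ?_
    rw [smul_mul_smul_comm, mul_nonsing_inv _ ((isUnit_iff_isUnit_det _).mp hK.isUnit),
      mul_inv_cancel₀ (by positivity), one_smul]
  have hcoeff : γ * (γ * (2 * γ)⁻¹) = γ / 2 := by field_simp
  have hSchur : (2 : ℝ) • E - (2 * γ) • M - (γ • E) * ((2 * γ) • K)⁻¹ * (γ • E) =
      (2 : ℝ) • (E - γ • (M + (1 / 4 : ℝ) • (E * K⁻¹ * E))) := by
    rw [hKinv, smul_mul_smul_comm, smul_mul_smul_comm, mul_right_comm, mul_assoc γ, hcoeff]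
    module
  have h := posDef_fromBlocks_iff_schur₁₁ (hK.smul (by positivity : 0 < 2 * γ)) (γ • E)
    ((2 : ℝ) • E - (2 * γ) • M)
  rwa [hγE, hSchur, posDef_smul_iff two_pos] at h

theorem posDef_add_smul_mul_inv_mul {M E K : Matrix n n 𝕜} (hM : M.PosDef) (hE : E.IsHermitian)
    (hK : K.PosDef) {c : ℝ} (hc : 0 ≤ c) : (M + c • (E * K⁻¹ * E)).PosDef := by
  have hEKE : (E * K⁻¹ * E).PosSemidef := by
    simpa only [hE.eq] using hK.inv.posSemidef.conjTranspose_mul_mul_same E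
  exact hM.add_posSemidef (hEKE.smul hc)

theorem posDef_iff_forall_mem_spectrum_pos {A : Matrix n n 𝕜} (hA : A.IsHermitian) :
    A.PosDef ↔ ∀ μ ∈ spectrum ℝ A, 0 < μ := by
  rw [hA.posDef_iff_eigenvalues_pos, hA.spectrum_real_eq_range_eigenvalues, Set.forall_mem_range]

theorem posDef_sub_smul_one_iff_forall_mem_spectrum_lt {A : Matrix n n 𝕜} (hA : A.IsHermitian)
    {γ : ℝ} : (A - γ • (1 : Matrix n n 𝕜)).PosDef ↔ ∀ μ ∈ spectrum ℝ A, γ < μ := by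
  rw [posDef_iff_forall_mem_spectrum_pos (hA.sub (isHermitian_one.smul (.all γ))),
    ← Algebra.algebraMap_eq_smul_one, ← spectrum.sub_singleton_eq, Set.sub_singleton]
  simp only [Set.forall_mem_image, sub_pos]

open scoped MatrixOrder in
theorem exists_unit_eq_star_mul_self_of_posDef {S : Matrix n n 𝕜} (hS : S.PosDef) :
    ∃ U : (Matrix n n 𝕜)ˣ, S = star (U : Matrix n n 𝕜) * U := by
  obtain ⟨U, hU, rfl⟩ := CStarAlgebra.isStrictlyPositive_iff_eq_star_mul_self.mp
    (isStrictlyPositive_iff_posDef.mpr hS)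
  exact ⟨hU.unit, rfl⟩

theorem exists_isHermitian_eq_star_mul_mul (U : (Matrix n n 𝕜)ˣ) {E : Matrix n n 𝕜}
    (hE : E.IsHermitian) : ∃ T, T.IsHermitian ∧ E = star (U : Matrix n n 𝕜) * T * U := by
  refine ⟨star (↑U⁻¹ : Matrix n n 𝕜) * E * (↑U⁻¹ : Matrix n n 𝕜),
    isHermitian_conjTranspose_mul_mul _ hE, ?_⟩
  have hU : star (U : Matrix n n 𝕜) * star (↑U⁻¹ : Matrix n n 𝕜) = 1 := by
    rw [← star_mul, Units.inv_mul, star_one]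
  rw [← mul_assoc, ← mul_assoc, hU, one_mul, mul_assoc, Units.inv_mul, mul_one]

theorem posDef_sub_smul_iff_forall_mem_spectrum_mul_inv_lt {S E : Matrix n n 𝕜} (hS : S.PosDef)
    (hE : E.IsHermitian) {γ : ℝ} :
    (E - γ • S).PosDef ↔ ∀ μ ∈ spectrum ℝ (E * S⁻¹), γ < μ := by
  obtain ⟨U, rfl⟩ := exists_unit_eq_star_mul_self_of_posDef hS
  obtain ⟨T, hT, rfl⟩ := exists_isHermitian_eq_star_mul_mul U hE
  have hcongr : star (U : Matrix n n 𝕜) * T * U - γ • (star (U : Matrix n n 𝕜) * U) =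
      star (U : Matrix n n 𝕜) * (T - γ • (1 : Matrix n n 𝕜)) * U := by
    simp only [mul_sub, sub_mul, mul_smul_comm, smul_mul_assoc, mul_one]
  have hsimilar : star (U : Matrix n n 𝕜) * T * U * (star (U : Matrix n n 𝕜) * U)⁻¹ =
      (star U : (Matrix n n 𝕜)ˣ) * T * (↑(star U)⁻¹ : Matrix n n 𝕜) := by
    rw [Matrix.mul_inv_rev, ← mul_assoc, mul_assoc _ (U : Matrix n n 𝕜), ← coe_units_inv U,
      Units.mul_inv, mul_one, coe_units_inv (star U), Units.coe_star]
  rw [hcongr, hsimilar, U.isUnit.posDef_star_left_conjugate_iff, spectrum.units_conjugate,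
    posDef_sub_smul_one_iff_forall_mem_spectrum_lt hT]

theorem strictly_dissipative_realization_general {M E K : Matrix n n 𝕜} (hM : M.PosDef)
    (hE : E.IsHermitian) (hK : K.PosDef) {γ : ℝ} (hγ0 : 0 < γ)
    (hγ : ∀ μ ∈ spectrum ℝ (E * (M + (1 / 4 : ℝ) • (E * K⁻¹ * E))⁻¹), γ < μ) :
    (energyMatrix γ M K).PosDef ∧
    stateMatrix γ M E K + (stateMatrix γ M E K)ᴴ =
      fromBlocks (-((2 * γ) • K)) (-(γ • E)) (-(γ • E)) (-(2 : ℝ) • E + (2 * γ) • M) ∧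
    (-(stateMatrix γ M E K + (stateMatrix γ M E K)ᴴ)).PosDef := by
  have hS : (M + (1 / 4 : ℝ) • (E * K⁻¹ * E)).PosDef :=
    posDef_add_smul_mul_inv_mul hM hE hK (by norm_num)
  have hgap : (E - γ • (M + (1 / 4 : ℝ) • (E * K⁻¹ * E))).PosDef :=
    (posDef_sub_smul_iff_forall_mem_spectrum_mul_inv_lt hS hE).mpr hγ
  have hD : (dissipationMatrix γ M E K).PosDef :=
    (posDef_dissipationMatrix_iff hE hK hγ0 M).mpr hgap
  have hℰ : (energyMatrix γ M K).PosDef :=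
    (posDef_energyMatrix_iff hM K γ).mpr (posDef_sub_sq_smul_of_posDef_dissipationMatrix hγ0 hD)
  rw [stateMatrix_add_conjTranspose hM.isHermitian hE hK.isHermitian, neg_neg]
  exact ⟨hℰ, neg_dissipationMatrix γ M E K, hD⟩

end

/-- For symmetric positive definite `M, E, K` and
`0 < γ < λ_min(E(M + (1/4)E K⁻¹ E)⁻¹)` (all eigenvalues of that product are real and
positive; the hypothesis below states that `γ` is below the real part of every
eigenvalue), the strictly dissipative realization matrices satisfy:
`ℰ = [[K, γM], [γM, M]]` is symmetric positive definite and, for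
`𝒜 = [[−γK, K − γE], [−K, −E + γM]]`, the matrix
`𝒜 + 𝒜ᵀ = [[−2γK, −γE], [−γE, −2E + 2γM]]` is symmetric negative definite. -/
theorem strictly_dissipative_realization {n : ℕ}
    (M E K : Matrix (Fin n) (Fin n) ℝ)
    (hM : M.PosDef) (hE : E.PosDef) (hK : K.PosDef)
    (γ : ℝ) (hγ0 : 0 < γ)
    (hγ : ∀ μ : ℂ,
      ((E * (M + (1 / 4 : ℝ) • (E * K⁻¹ * E))⁻¹).map Complex.ofReal -
          μ • (1 : Matrix (Fin n) (Fin n) ℂ)).det = 0 → γ < μ.re)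
    (ℰ 𝒜 : Matrix (Fin n ⊕ Fin n) (Fin n ⊕ Fin n) ℝ)
    (hℰ : ℰ = Matrix.fromBlocks K (γ • M) (γ • M) M)
    (h𝒜 : 𝒜 = Matrix.fromBlocks (-(γ • K)) (K - γ • E) (-K) (-E + γ • M)) :
    ℰ.PosDef ∧
    𝒜 + 𝒜ᵀ =
      Matrix.fromBlocks (-((2 * γ) • K)) (-(γ • E)) (-(γ • E)) (-(2 : ℝ) • E + (2 * γ) • M) ∧
    (-(𝒜 + 𝒜ᵀ)).PosDef := by
  subst hℰ h𝒜
  exact strictly_dissipative_realization_general hM hE.isHermitian hK hγ0 fun μ hμ ↦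
    hγ μ (det_map_sub_smul_one_eq_zero_of_mem_spectrum Complex.ofRealHom hμ)
end
end

section
/- Let ℰ, 𝒜 ∈ ℝ^{N×N} with ℰ symmetric positive definite and 𝒜 + 𝒜ᵀ symmetric negative definite, let ℒ be an invertible matrix with ℰ = ℒℒᵀ (e.g., the Cholesky factor of ℰ), and let V ∈ ℝ^{N×k} have orthonormal columns. Then the projected matrix 𝒯 = Vᵀ ℒ^{-1} 𝒜 ℒ^{-ᵀ} V satisfies that 𝒯 + 𝒯ᵀ is negative definite, and consequently every eigenvalue of 𝒯 has negative real part. -/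
open Matrix

noncomputable section

/-!
A congruence `M ↦ Wᴴ M W` commutes with `M ↦ M + Mᴴ` and preserves definiteness when `W` has
trivial kernel; taking `W = ℒ⁻ᴴ` and then `W = V` makes `𝒯 + 𝒯ᴴ` negative definite. If `𝒯 v = μ v`
with `v ≠ 0`, then `vᴴ (𝒯 + 𝒯ᴴ) v = 2 (Re μ) ‖v‖²`, which forces `Re μ < 0`. A complex `v` is
allowed for real `𝒯` because a factorization `-(𝒯 + 𝒯ᴴ) = Bᴴ B` with `B` invertible stays one
over `ℂ`.
-/

theorem mulVec_injective_of_mul_eq_one {m n R : Type*} [Fintype m] [Fintype n] [DecidableEq n]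
    [Semiring R] {A : Matrix m n R} {B : Matrix n m R} (h : B * A = 1) :
    Function.Injective A.mulVec :=
  Function.LeftInverse.injective (g := B.mulVec) fun v => by rw [mulVec_mulVec, h, one_mulVec]

/-- A matrix is strictly dissipative when its Hermitian part is negative definite. Definiteness is
imposed on `M + Mᴴ`, without the factor `1 / 2`. Over `ℝ` this is the condition `𝒜 + 𝒜ᵀ < 0` on
the state matrix of a strictly dissipative realization. -/
def IsStrictlyDissipative {n R : Type*} [Ring R] [PartialOrder R] [StarRing R]
    (M : Matrix n n R) : Prop :=
  (-(M + Mᴴ)).PosDef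

namespace IsStrictlyDissipative

theorem conjTranspose_mul_mul_same {m n R : Type*} [Fintype m] [Fintype n]
    [Ring R] [PartialOrder R] [StarRing R] {A : Matrix n n R} {W : Matrix n m R}
    (hA : IsStrictlyDissipative A) (hW : Function.Injective W.mulVec) :
    IsStrictlyDissipative (Wᴴ * A * W) := by
  have hcongr : -(Wᴴ * A * W + (Wᴴ * A * W)ᴴ) = Wᴴ * -(A + Aᴴ) * W := by
    simp only [conjTranspose_mul, conjTranspose_conjTranspose, Matrix.mul_neg, Matrix.neg_mul,
      Matrix.mul_add, Matrix.add_mul, Matrix.mul_assoc]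
  rw [IsStrictlyDissipative, hcongr]
  exact PosDef.conjTranspose_mul_mul_same hA hW

end IsStrictlyDissipative

section RCLike

open scoped ComplexOrder

theorem posDef_map_algebraMap {n 𝕜 𝕂 : Type*} [Finite n] [RCLike 𝕜] [RCLike 𝕂]
    [Algebra 𝕜 𝕂] [StarModule 𝕜 𝕂] {S : Matrix n n 𝕜} (hS : S.PosDef) :
    (S.map (algebraMap 𝕜 𝕂)).PosDef := by
  classical
  have := Fintype.ofFinite n
  open scoped MatrixOrder in
  obtain ⟨B, hB, rfl⟩ :=
    CStarAlgebra.isStrictlyPositive_iff_eq_star_mul_self.mp hS.isStrictlyPositive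
  rw [star_eq_conjTranspose, Matrix.map_mul, conjTranspose_map _ algebraMap_star_comm]
  have hB' : IsUnit (B.map (algebraMap 𝕜 𝕂)) := hB.map (algebraMap 𝕜 𝕂).mapMatrix
  exact PosDef.conjTranspose_mul_self _ (mulVec_injective_of_isUnit hB')

namespace IsStrictlyDissipative

variable {n 𝕜 𝕂 : Type*} [RCLike 𝕜] [RCLike 𝕂]

theorem map_algebraMap [Finite n] [Algebra 𝕜 𝕂] [StarModule 𝕜 𝕂] {M : Matrix n n 𝕜}
    (hM : IsStrictlyDissipative M) : IsStrictlyDissipative (M.map (algebraMap 𝕜 𝕂)) := by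
  have hmap : -(M.map (algebraMap 𝕜 𝕂) + (M.map (algebraMap 𝕜 𝕂))ᴴ) =
      (-(M + Mᴴ)).map (algebraMap 𝕜 𝕂) := by
    rw [← conjTranspose_map _ algebraMap_star_comm]
    ext i j
    simp only [Matrix.neg_apply, Matrix.add_apply, map_apply, map_neg, map_add]
  rw [IsStrictlyDissipative, hmap]
  exact posDef_map_algebraMap hM

theorem re_lt_zero_of_mulVec_eq_smul [Fintype n] {M : Matrix n n 𝕂}
    (hM : IsStrictlyDissipative M) {μ : 𝕂} {v : n → 𝕂} (hv : v ≠ 0) (hμ : M *ᵥ v = μ • v) :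
    RCLike.re μ < 0 := by
  have hconj : star v ⬝ᵥ Mᴴ *ᵥ v = star μ * (star v ⬝ᵥ v) := by
    rw [dotProduct_mulVec, ← star_mulVec, hμ, star_smul, smul_dotProduct, smul_eq_mul]
  have hform : star v ⬝ᵥ (-(M + Mᴴ)) *ᵥ v = -(μ + star μ) * (star v ⬝ᵥ v) := by
    rw [neg_mulVec, add_mulVec, dotProduct_neg, dotProduct_add, hconj, hμ, dotProduct_smul,
      smul_eq_mul, ← add_mul, neg_mul]
  have hpos : 0 < -(μ + star μ) * (star v ⬝ᵥ v) := hform ▸ hM.dotProduct_mulVec_pos hv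
  have hsum : 0 < -(μ + star μ) := pos_of_mul_pos_left hpos (dotProduct_star_self_nonneg v)
  have hre := (RCLike.pos_iff.mp hsum).1
  simp only [map_neg, map_add, RCLike.star_def, RCLike.conj_re] at hre
  linarith

theorem re_lt_zero_of_det_sub_smul_one_eq_zero [Fintype n] [DecidableEq n] {M : Matrix n n 𝕂}
    (hM : IsStrictlyDissipative M) {μ : 𝕂} (hμ : (M - μ • (1 : Matrix n n 𝕂)).det = 0) :
    RCLike.re μ < 0 := by
  obtain ⟨v, hv, hker⟩ := exists_mulVec_eq_zero_iff.mpr hμ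
  rw [sub_mulVec, smul_mulVec, one_mulVec, sub_eq_zero] at hker
  exact hM.re_lt_zero_of_mulVec_eq_smul hv hker

end IsStrictlyDissipative

theorem projection_of_strictly_dissipative_is_stable_general {m n 𝕜 : Type*} [Fintype m]
    [DecidableEq m] [Fintype n] [DecidableEq n] [RCLike 𝕜] [Algebra 𝕜 ℂ] [StarModule 𝕜 ℂ]
    {A L : Matrix n n 𝕜} (hA : IsStrictlyDissipative A) (hL : IsUnit L)
    {V : Matrix n m 𝕜} (hV : Function.Injective V.mulVec)
    {T : Matrix m m 𝕜} (hT : T = Vᴴ * (L⁻¹ * A * L⁻¹ᴴ) * V) :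
    IsStrictlyDissipative T ∧
    ∀ μ : ℂ, (T.map (algebraMap 𝕜 ℂ) - μ • (1 : Matrix m m ℂ)).det = 0 → μ.re < 0 := by
  have hL' : Function.Injective L⁻¹ᴴ.mulVec :=
    mulVec_injective_of_isUnit (isUnit_nonsing_inv_iff.mpr hL).star
  have hstd : IsStrictlyDissipative (L⁻¹ * A * L⁻¹ᴴ) := by
    simpa only [conjTranspose_conjTranspose] using hA.conjTranspose_mul_mul_same hL'
  have hproj : IsStrictlyDissipative T := hT ▸ hstd.conjTranspose_mul_mul_same hV
  exact ⟨hproj, fun μ hμ => hproj.map_algebraMap.re_lt_zero_of_det_sub_smul_one_eq_zero hμ⟩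

end RCLike

/-- Galerkin projection applied to (the standard state-space realization obtained from)
a strictly dissipative realization preserves stability: if `ℰ` is symmetric positive
definite with `ℰ = ℒℒᵀ` (`ℒ` invertible), `𝒜 + 𝒜ᵀ` is negative definite, and `V` has
orthonormal columns, then `𝒯 = Vᵀ ℒ⁻¹ 𝒜 ℒ⁻ᵀ V` satisfies that `𝒯 + 𝒯ᵀ` is negative
definite, and consequently every eigenvalue of `𝒯` has negative real part. -/
theorem projection_of_strictly_dissipative_is_stable {N k : ℕ}
    (ℰ 𝒜 : Matrix (Fin N) (Fin N) ℝ)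
    (hℰ : ℰ.PosDef) (h𝒜 : (-(𝒜 + 𝒜ᵀ)).PosDef)
    (ℒ : Matrix (Fin N) (Fin N) ℝ) (hℒ : IsUnit ℒ) (hEL : ℰ = ℒ * ℒᵀ)
    (V : Matrix (Fin N) (Fin k) ℝ) (hV : Vᵀ * V = 1)
    (𝒯 : Matrix (Fin k) (Fin k) ℝ)
    (h𝒯 : 𝒯 = Vᵀ * (ℒ⁻¹ * 𝒜 * ℒ⁻¹ᵀ) * V) :
    (-(𝒯 + 𝒯ᵀ)).PosDef ∧
    ∀ μ : ℂ, (𝒯.map Complex.ofReal - μ • (1 : Matrix (Fin k) (Fin k) ℂ)).det = 0 →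
      μ.re < 0 :=
  projection_of_strictly_dissipative_is_stable_general h𝒜 hℒ (mulVec_injective_of_mul_eq_one hV) h𝒯
end
end

section
/- Let M, E, K ∈ ℝ^{n×n} with M invertible, B_u ∈ ℝ^{n×m}, γ ∈ ℝ. Define the first companion form with J = I_n: ℰ₁ = [[I_n, 0], [0, M]], 𝒜₁ = [[0, I_n], [−K, −E]], ℬ₁ = [0; B_u]; the strictly dissipative realization ℰ₂ = [[K, γM], [γM, M]], 𝒜₂ = [[−γK, K − γE], [−K, −E + γM]], ℬ₂ = [γB_u; B_u]; and T = [[K, γI_n], [γM, I_n]]. Then ℰ₂ = Tℰ₁, 𝒜₂ = T𝒜₁, ℬ₂ = Tℬ₁. Consequently, if T is invertible, a matrix P ∈ ℝ^{2n×2n} satisfies 𝒜₂ P ℰ₂ᵀ + ℰ₂ P 𝒜₂ᵀ + ℬ₂ℬ₂ᵀ = 0 if and only if it satisfies 𝒜₁ P ℰ₁ᵀ + ℰ₁ P 𝒜₁ᵀ + ℬ₁ℬ₁ᵀ = 0; and for 𝒞 = [C_p, C_v], a matrix Q̃ satisfies 𝒜₂ᵀ Q̃ ℰ₂ + ℰ₂ᵀ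 Q̃ 𝒜₂ + 𝒞ᵀ𝒞 = 0 if and only if Q = Tᵀ Q̃ T satisfies 𝒜₁ᵀ Q ℰ₁ + ℰ₁ᵀ Q 𝒜₁ + 𝒞ᵀ𝒞 = 0. -/
open Matrix

noncomputable section

/-- A generalized first-order realization `ℰ ż = 𝒜 z + ℬ u`, `y = 𝒞 z`, with states, inputs and
outputs indexed by `ι`, `μ` and `π`. The descriptor matrix `ℰ` is allowed to be singular. -/
structure GeneralizedRealization (ι μ π R : Type*) where
  ℰ : Matrix ι ι R
  𝒜 : Matrix ι ι R
  ℬ : Matrix ι μ R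
  𝒞 : Matrix π ι R

namespace GeneralizedRealization

section Gramians

variable {ι μ π R : Type*} [Fintype ι] [CommSemiring R]

/-- Left multiplication of the state equation by `T`; the output equation is untouched. -/
def leftMul (T : Matrix ι ι R) (S : GeneralizedRealization ι μ π R) :
    GeneralizedRealization ι μ π R where
  ℰ := T * S.ℰ
  𝒜 := T * S.𝒜
  ℬ := T * S.ℬ
  𝒞 := S.𝒞

/-- `P` is a controllability Gramian, in the algebraic sense of a solution of the generalized
Lyapunov equation: neither symmetry nor uniqueness of `P` is required. -/
def IsControllabilityGramian [Fintype μ] (S : GeneralizedRealization ι μ π R)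
    (P : Matrix ι ι R) : Prop :=
  S.𝒜 * P * S.ℰᵀ + S.ℰ * P * S.𝒜ᵀ + S.ℬ * S.ℬᵀ = 0

/-- `Q` is an observability Gramian, in the algebraic sense of a solution of the dual generalized
Lyapunov equation: neither symmetry nor uniqueness of `Q` is required. -/
def IsObservabilityGramian [Fintype π] (S : GeneralizedRealization ι μ π R)
    (Q : Matrix ι ι R) : Prop :=
  S.𝒜ᵀ * Q * S.ℰ + S.ℰᵀ * Q * S.𝒜 + S.𝒞ᵀ * S.𝒞 = 0

theorem isObservabilityGramian_leftMul_iff [Fintype π] (S : GeneralizedRealization ι μ π R)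
    (T Q : Matrix ι ι R) :
    (S.leftMul T).IsObservabilityGramian Q ↔ S.IsObservabilityGramian (Tᵀ * Q * T) := by
  simp only [IsObservabilityGramian, leftMul, transpose_mul, Matrix.mul_assoc]

theorem isControllabilityGramian_leftMul_iff [DecidableEq ι] [Fintype μ]
    (S : GeneralizedRealization ι μ π R) {T : Matrix ι ι R} (hT : IsUnit T) (P : Matrix ι ι R) :
    (S.leftMul T).IsControllabilityGramian P ↔ S.IsControllabilityGramian P := by
  have congruence :
      T * S.𝒜 * P * (T * S.ℰ)ᵀ + T * S.ℰ * P * (T * S.𝒜)ᵀ + T * S.ℬ * (T * S.ℬ)ᵀ =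
        T * (S.𝒜 * P * S.ℰᵀ + S.ℰ * P * S.𝒜ᵀ + S.ℬ * S.ℬᵀ) * Tᵀ := by
    simp only [transpose_mul, Matrix.mul_add, Matrix.add_mul, Matrix.mul_assoc]
  have hTt : IsUnit Tᵀ := (isUnit_transpose T).2 hT
  simp only [IsControllabilityGramian, leftMul, congruence, hTt.mul_left_eq_zero,
    hT.mul_right_eq_zero]

end Gramians

section SecondOrder

variable {ι μ π R : Type*} [CommRing R]

/-- The first companion form, with `J = I`, of the second-order system
`M ẍ + E ẋ + K x = Bu u`, `y = Cp x + Cv ẋ`, in the state `(x, ẋ)`. -/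
def firstCompanion [DecidableEq ι] (M E K : Matrix ι ι R) (Bu : Matrix ι μ R)
    (Cp Cv : Matrix π ι R) : GeneralizedRealization (ι ⊕ ι) μ π R where
  ℰ := fromBlocks 1 0 0 M
  𝒜 := fromBlocks 0 1 (-K) (-E)
  ℬ := fromRows 0 Bu
  𝒞 := fromCols Cp Cv

/-- The strictly dissipative realization, with parameter `γ`, of the second-order system
`M ẍ + E ẋ + K x = Bu u`, `y = Cp x + Cv ẋ`. The positivity conditions on `M`, `E`, `K` and `γ`
that make it dissipative are not part of the definition. -/
def strictlyDissipative (M E K : Matrix ι ι R) (Bu : Matrix ι μ R) (Cp Cv : Matrix π ι R) (γ : R) :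
    GeneralizedRealization (ι ⊕ ι) μ π R where
  ℰ := fromBlocks K (γ • M) (γ • M) M
  𝒜 := fromBlocks (-(γ • K)) (K - γ • E) (-K) (-E + γ • M)
  ℬ := fromRows (γ • Bu) Bu
  𝒞 := fromCols Cp Cv

/-- The matrix `T` which, multiplied from the left, turns the first companion form into the
strictly dissipative realization. -/
def dissipativeTransform [DecidableEq ι] (M K : Matrix ι ι R) (γ : R) :
    Matrix (ι ⊕ ι) (ι ⊕ ι) R :=
  fromBlocks K (γ • 1) (γ • M) 1

theorem strictlyDissipative_eq_leftMul_firstCompanion [Fintype ι] [DecidableEq ι]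
    (M E K : Matrix ι ι R) (Bu : Matrix ι μ R) (Cp Cv : Matrix π ι R) (γ : R) :
    strictlyDissipative M E K Bu Cp Cv γ =
      (firstCompanion M E K Bu Cp Cv).leftMul (dissipativeTransform M K γ) := by
  have hℰ : fromBlocks K (γ • M) (γ • M) M =
      dissipativeTransform M K γ * fromBlocks 1 0 0 M := by
    simp [dissipativeTransform, fromBlocks_multiply]
  have h𝒜 : fromBlocks (-(γ • K)) (K - γ • E) (-K) (-E + γ • M) =
      dissipativeTransform M K γ * fromBlocks 0 1 (-K) (-E) := by
    simp [dissipativeTransform, fromBlocks_multiply, sub_eq_add_neg, add_comm]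
  have hℬ : fromRows (γ • Bu) Bu =
      dissipativeTransform M K γ * fromRows (0 : Matrix ι μ R) Bu := by
    simp [dissipativeTransform, fromBlocks_mul_fromRows]
  simp only [strictlyDissipative, firstCompanion, leftMul, hℰ, h𝒜, hℬ]

end SecondOrder

end GeneralizedRealization

open GeneralizedRealization in
theorem strictly_dissipative_vs_companion_gramians_general {ι μ π R : Type*} [Fintype ι]
    [DecidableEq ι] [Fintype μ] [Fintype π] [CommRing R] (M E K : Matrix ι ι R)
    (Bu : Matrix ι μ R) (Cp Cv : Matrix π ι R) (γ : R) :
    let S₁ := firstCompanion M E K Bu Cp Cv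
    let S₂ := strictlyDissipative M E K Bu Cp Cv γ
    let T := dissipativeTransform M K γ
    S₂ = S₁.leftMul T ∧
      (IsUnit T → ∀ P, S₂.IsControllabilityGramian P ↔ S₁.IsControllabilityGramian P) ∧
      ∀ Q, S₂.IsObservabilityGramian Q ↔ S₁.IsObservabilityGramian (Tᵀ * Q * T) := by
  intro S₁ S₂ T
  have hS : S₂ = S₁.leftMul T := strictlyDissipative_eq_leftMul_firstCompanion M E K Bu Cp Cv γ
  rw [hS]
  exact ⟨rfl, fun hT => S₁.isControllabilityGramian_leftMul_iff hT,
    S₁.isObservabilityGramian_leftMul_iff T⟩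

/-- The strictly dissipative realization `(ℰ₂, 𝒜₂, ℬ₂)` of a second-order system is
obtained from its first companion form `(ℰ₁, 𝒜₁, ℬ₁)` (with `J = I`) by left
multiplication with `T = [[K, γI], [γM, I]]`. Consequently, if `T` is invertible, the
controllability Gramians of the two realizations coincide, while the observability
Gramians are related by `Q = Tᵀ Qt T`. -/
theorem strictly_dissipative_vs_companion_gramians {n m p : ℕ}
    (M E K : Matrix (Fin n) (Fin n) ℝ) (hM : IsUnit M)
    (Bu : Matrix (Fin n) (Fin m) ℝ) (Cp Cv : Matrix (Fin p) (Fin n) ℝ) (γ : ℝ)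
    (ℰ₁ 𝒜₁ ℰ₂ 𝒜₂ T : Matrix (Fin n ⊕ Fin n) (Fin n ⊕ Fin n) ℝ)
    (ℬ₁ ℬ₂ : Matrix (Fin n ⊕ Fin n) (Fin m) ℝ)
    (𝒞 : Matrix (Fin p) (Fin n ⊕ Fin n) ℝ)
    (hℰ₁ : ℰ₁ = Matrix.fromBlocks 1 0 0 M)
    (h𝒜₁ : 𝒜₁ = Matrix.fromBlocks 0 1 (-K) (-E))
    (hℬ₁ : ℬ₁ = Matrix.of (Sum.elim (fun _ _ => (0 : ℝ)) (fun i j => Bu i j)))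
    (hℰ₂ : ℰ₂ = Matrix.fromBlocks K (γ • M) (γ • M) M)
    (h𝒜₂ : 𝒜₂ = Matrix.fromBlocks (-(γ • K)) (K - γ • E) (-K) (-E + γ • M))
    (hℬ₂ : ℬ₂ = Matrix.of (Sum.elim (fun i j => γ * Bu i j) (fun i j => Bu i j)))
    (hT : T = Matrix.fromBlocks K (γ • 1) (γ • M) 1)
    (h𝒞 : 𝒞 = Matrix.of (fun i => Sum.elim (fun j => Cp i j) (fun j => Cv i j))) :
    ℰ₂ = T * ℰ₁ ∧ 𝒜₂ = T * 𝒜₁ ∧ ℬ₂ = T * ℬ₁ ∧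
    (IsUnit T →
      (∀ P : Matrix (Fin n ⊕ Fin n) (Fin n ⊕ Fin n) ℝ,
        (𝒜₂ * P * ℰ₂ᵀ + ℰ₂ * P * 𝒜₂ᵀ + ℬ₂ * ℬ₂ᵀ = 0 ↔
          𝒜₁ * P * ℰ₁ᵀ + ℰ₁ * P * 𝒜₁ᵀ + ℬ₁ * ℬ₁ᵀ = 0)) ∧
      (∀ Qt : Matrix (Fin n ⊕ Fin n) (Fin n ⊕ Fin n) ℝ,
        (𝒜₂ᵀ * Qt * ℰ₂ + ℰ₂ᵀ * Qt * 𝒜₂ + 𝒞ᵀ * 𝒞 = 0 ↔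
          𝒜₁ᵀ * (Tᵀ * Qt * T) * ℰ₁ + ℰ₁ᵀ * (Tᵀ * Qt * T) * 𝒜₁ + 𝒞ᵀ * 𝒞 = 0))) := by
  subst hℰ₁ h𝒜₁ hℬ₁ hℰ₂ h𝒜₂ hℬ₂ hT h𝒞
  obtain ⟨hS, hP, hQ⟩ := strictly_dissipative_vs_companion_gramians_general M E K Bu Cp Cv γ
  exact ⟨congrArg (·.ℰ) hS, congrArg (·.𝒜) hS, congrArg (·.ℬ) hS, fun hT => ⟨hP hT, hQ⟩⟩
end
end

section
/- Let M, E, K ∈ ℝ^{n×n} be symmetric positive definite and let T ∈ ℝ^{n×r} have full column rank r. Then the reduced matrices M̂ = TᵀMT, Ê = TᵀET, K̂ = TᵀKT are symmetric positive definite, and every λ ∈ ℂ with det(λ²M̂ + λÊ + K̂) = 0 has negative real part. In particular, any one-sided structure-preserving projection (such as the free-velocity (fv) second-order balanced truncation, which uses W = T) of a second-order system with symmetric positive definite M, E, K yields an asymptotically stable reduced-order second-order system. -/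
/-!
If `λ` is an eigenvalue of the pencil `λ² M + λ E + K` with eigenvector `v`, then `λ` is a root of
the scalar quadratic `λ² v*Mv + λ v*Ev + v*Kv`, whose coefficients are real with `v*Mv ≥ 0` and
`v*Ev, v*Kv > 0`; such a quadratic has all its roots in the open left half-plane. A congruence
by a matrix of full column rank preserves definiteness of the coefficients.
-/

open Matrix

noncomputable section

section CStability

open scoped ComplexOrder

/-- The quadratic matrix pencil `λ² M + λ E + K` is c-stable: all its finite eigenvalues, encoded
as the complex roots of its determinant, lie in the open left half-plane. -/
def IsCStablePencil {n : Type*} [Fintype n] [DecidableEq n] (M E K : Matrix n n ℂ) : Prop :=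
  ∀ μ : ℂ, (μ ^ 2 • M + μ • E + K).det = 0 → μ.re < 0

theorem re_neg_of_quadratic_eq_zero {m e k μ : ℂ} (hm : 0 ≤ m) (he : 0 < e) (hk : 0 < k)
    (hμ : μ ^ 2 * m + μ * e + k = 0) : μ.re < 0 := by
  obtain ⟨m, hm, rfl⟩ := RCLike.nonneg_iff_exists_ofReal.mp hm
  obtain ⟨e, he, rfl⟩ := RCLike.pos_iff_exists_ofReal.mp he
  obtain ⟨k, hk, rfl⟩ := RCLike.pos_iff_exists_ofReal.mp hk
  by_contra! hre
  have him : μ.im = 0 := by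
    have hfactor : μ.im * (2 * μ.re * m + e) = 0 := by
      have himag : (μ.re * μ.im + μ.im * μ.re) * m + μ.im * e = 0 := by
        simpa [pow_two] using congrArg Complex.im hμ
      linear_combination himag
    exact (mul_eq_zero.mp hfactor).resolve_right (by positivity)
  have hreal : μ.re ^ 2 * m + μ.re * e + k = 0 := by
    simpa [pow_two, him] using congrArg Complex.re hμ
  have hpos : 0 < μ.re ^ 2 * m + μ.re * e + k := by positivity
  exact hpos.ne' hreal

theorem isCStablePencil_of_posSemidef_of_posDef {n : Type*} [Fintype n] [DecidableEq n]
    {M E K : Matrix n n ℂ} (hM : M.PosSemidef) (hE : E.PosDef) (hK : K.PosDef) :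
    IsCStablePencil M E K := by
  intro μ hdet
  obtain ⟨v, hv, hker⟩ := exists_mulVec_eq_zero_iff.mpr hdet
  refine re_neg_of_quadratic_eq_zero (hM.dotProduct_mulVec_nonneg v)
    (hE.dotProduct_mulVec_pos hv) (hK.dotProduct_mulVec_pos hv) ?_
  simpa only [add_mulVec, smul_mulVec, dotProduct_add, dotProduct_smul, smul_eq_mul,
    dotProduct_zero] using congrArg (star v ⬝ᵥ ·) hker

end CStability

section BaseChange

open scoped ComplexOrder MatrixOrder

variable {𝕜 𝕜' n : Type*} [RCLike 𝕜] [RCLike 𝕜'] [Finite n] {A : Matrix n n 𝕜}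

theorem posSemidef_map_starAlgHom (hA : A.PosSemidef) (φ : 𝕜 →⋆ₐ[ℝ] 𝕜') :
    (A.map φ).PosSemidef := by
  classical
  have := Fintype.ofFinite n
  obtain ⟨B, rfl⟩ := CStarAlgebra.nonneg_iff_eq_star_mul_self.mp hA.nonneg
  have hmap : (star B * B).map φ = (B.map φ)ᴴ * B.map φ := by
    rw [Matrix.map_mul, star_eq_conjTranspose, conjTranspose_map φ (map_star φ)]
  exact hmap ▸ posSemidef_conjTranspose_mul_self _

theorem posDef_map_starAlgHom (hA : A.PosDef) (φ : 𝕜 →⋆ₐ[ℝ] 𝕜') : (A.map φ).PosDef := by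
  classical
  have := Fintype.ofFinite n
  exact (posSemidef_map_starAlgHom hA.posSemidef φ).posDef_iff_isUnit.mpr
    (hA.isUnit.map (RingHomClass.toRingHom φ).mapMatrix)

end BaseChange

section Projection

theorem mulVec_injective_iff_rank_eq_card {F m n : Type*} [Field F] [Fintype n]
    {T : Matrix m n F} : Function.Injective T.mulVec ↔ T.rank = Fintype.card n := by
  rw [mulVec_injective_iff, linearIndependent_iff_card_eq_finrank_span,
    rank_eq_finrank_span_cols, eq_comm, Set.finrank]

open scoped ComplexOrder

variable {𝕜 m n : Type*} [RCLike 𝕜] [Fintype m] [Fintype n]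

theorem posDef_conjTranspose_mul_mul_of_rank_eq_card {A : Matrix m m 𝕜} (hA : A.PosDef)
    {T : Matrix m n 𝕜} (hT : T.rank = Fintype.card n) : (Tᴴ * A * T).PosDef :=
  hA.conjTranspose_mul_mul_same (mulVec_injective_iff_rank_eq_card.mpr hT)

/-- The map `φ` embeds the scalar field, `ℝ` or `ℂ`, into `ℂ`, where the eigenvalues are sought. -/
theorem one_sided_projection_preserves_stability_general [DecidableEq n] {M E K : Matrix m m 𝕜}
    (hM : M.PosSemidef) (hE : E.PosDef) (hK : K.PosDef)
    {T : Matrix m n 𝕜} (hT : T.rank = Fintype.card n) (φ : 𝕜 →⋆ₐ[ℝ] ℂ) :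
    (Tᴴ * M * T).PosSemidef ∧ (Tᴴ * E * T).PosDef ∧ (Tᴴ * K * T).PosDef ∧
      IsCStablePencil ((Tᴴ * M * T).map φ) ((Tᴴ * E * T).map φ) ((Tᴴ * K * T).map φ) := by
  have hM' := hM.conjTranspose_mul_mul_same T
  have hE' := posDef_conjTranspose_mul_mul_of_rank_eq_card hE hT
  have hK' := posDef_conjTranspose_mul_mul_of_rank_eq_card hK hT
  exact ⟨hM', hE', hK', isCStablePencil_of_posSemidef_of_posDef
    (posSemidef_map_starAlgHom hM' φ) (posDef_map_starAlgHom hE' φ) (posDef_map_starAlgHom hK' φ)⟩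

end Projection

/-- One-sided structure-preserving projection of a second-order system with symmetric
positive definite `M, E, K` (e.g., free-velocity second-order balanced truncation with
`W = T`) yields an asymptotically stable reduced second-order system: for `T` of full
column rank, `M̂ = TᵀMT`, `Ê = TᵀET`, `K̂ = TᵀKT` are symmetric positive definite and
every `λ ∈ ℂ` with `det(λ²M̂ + λÊ + K̂) = 0` has negative real part. -/
theorem one_sided_projection_preserves_stability {n r : ℕ}
    (M E K : Matrix (Fin n) (Fin n) ℝ)
    (hM : M.PosDef) (hE : E.PosDef) (hK : K.PosDef)
    (T : Matrix (Fin n) (Fin r) ℝ) (hT : T.rank = r) :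
    (Tᵀ * M * T).PosDef ∧ (Tᵀ * E * T).PosDef ∧ (Tᵀ * K * T).PosDef ∧
    ∀ μ : ℂ,
      (μ ^ 2 • (Tᵀ * M * T).map Complex.ofReal + μ • (Tᵀ * E * T).map Complex.ofReal +
        (Tᵀ * K * T).map Complex.ofReal).det = 0 → μ.re < 0 := by
  have hT' : T.rank = Fintype.card (Fin r) := by rw [hT, Fintype.card_fin]
  exact ⟨posDef_conjTranspose_mul_mul_of_rank_eq_card hM hT',
    (one_sided_projection_preserves_stability_general hM.posSemidef hE hK hT'
      (StarAlgHom.ofId ℝ ℂ)).2⟩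
end
end

section
/- Let ℰ, 𝒜 ∈ ℝ^{N×N} with ℰ invertible and the pencil λℰ − 𝒜 c-stable. Define the scaled Newton sign-function iteration A₁ = 𝒜 and, for k ≥ 1, c_k = (‖A_k‖_F / ‖ℰ A_k^{-1} ℰ‖_F)^{1/2} and A_{k+1} = (1/(2c_k)) A_k + (c_k/2) ℰ A_k^{-1} ℰ. Then every iterate A_k is invertible with λℰ − A_k c-stable (so the iteration is well defined), and A_k converges to −ℰ as k → ∞. -/
open Matrix Filter

noncomputable section

/-- The Frobenius norm of a real matrix. -/
def frobNorm {a b : ℕ} (A : Matrix (Fin a) (Fin b) ℝ) : ℝ :=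
  Real.sqrt (∑ i, ∑ j, (A i j) ^ 2)

/-!
With `A_k = -ℰX_k` the iteration becomes `X ↦ X / (2c) + (c / 2)X⁻¹` for a matrix `X₁` with
spectrum in the right half-plane, and the claim is `X_k → 1`. The step does not change when `X` is
multiplied by a positive number, so the iterates may be renormalized until each step is a damped
Newton step `y ↦ (1 - w)y + wy⁻¹` with `w = ν(y) / (ν(y) + ν(y⁻¹))`. In the coordinate
`y = (1 + q)(1 - q)⁻¹` such a step is `q ↦ qφ(q)`, where `φ` is the disk automorphism with
parameter `1 - 2w`. Since `q₁` has spectral radius less than `1`, a fixed similarity makes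
`‖q₁‖ < 1`, and von Neumann's inequality for `φ` shows that `‖q_k‖` never increases. Hence `y_k` and
`y_k⁻¹` stay bounded, so `w_k` stays away from `0` and `1`, and this in turn makes the contraction
uniform: `q_k → 0` and `y_k → 1`. Scale invariance and one further step carry the limit back to
`X_k`.
-/

open scoped Topology Ring

section ComplexAlgebra

variable {A : Type*} [Ring A] [Algebra ℂ A]

/-- An element of a complex algebra is positive stable if its spectrum lies in the open right
half-plane. A pencil `λℰ - 𝒜` is c-stable exactly when `-ℰ⁻¹𝒜` is positive stable. -/
def IsPositiveStable (x : A) : Prop :=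
  ∀ z ∈ spectrum ℂ x, 0 < z.re

theorem re_nonpos_of_mul_eq_ofReal {a b : ℂ} {r : ℝ} (hr : 0 < r)
    (hab : a * b = r) (hre : (a + b).re ≤ 0) : a.re ≤ 0 := by
  have h_re := congrArg Complex.re hab
  have h_im := congrArg Complex.im hab
  simp only [Complex.mul_re, Complex.mul_im, Complex.ofReal_re, Complex.ofReal_im] at h_re h_im
  have hb : b.re * (a.re ^ 2 + a.im ^ 2) = r * a.re := by
    linear_combination a.re * h_re + a.im * h_im
  by_contra! ha
  have : 0 < b.re := pos_of_mul_pos_left (hb ▸ mul_pos hr ha) (by positivity)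
  rw [Complex.add_re] at hre
  linarith

theorem exists_add_eq_mul_eq {k : Type*} [Field k] [IsAlgClosed k] [NeZero (2 : k)] (s p : k) :
    ∃ a b : k, a + b = s ∧ a * b = p := by
  obtain ⟨d, hd⟩ := IsAlgClosed.exists_pow_nat_eq (s ^ 2 - 4 * p) two_pos
  refine ⟨(s + d) / 2, (s - d) / 2, by ring_nf; field_simp, ?_⟩
  have : (2 : k) ≠ 0 := two_ne_zero
  field_simp
  linear_combination -hd

theorem isUnit_sub_algebraMap_iff {x : A} {z : ℂ} :
    IsUnit (x - algebraMap ℂ A z) ↔ z ∉ spectrum ℂ x := by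
  rw [spectrum.notMem_iff, IsUnit.sub_iff]

theorem sub_algebraMap_mul_sub_algebraMap_mul_inverse {x : A} (hx : IsUnit x) (a b : ℂ) :
    (x - algebraMap ℂ A a) * (x - algebraMap ℂ A b) * x⁻¹ʳ =
      x - algebraMap ℂ A (a + b) + (a * b) • x⁻¹ʳ := by
  have hx2 : x * x * x⁻¹ʳ = x := Ring.mul_inverse_cancel_right x x hx
  have hx1 : x * x⁻¹ʳ = 1 := Ring.mul_inverse_cancel x hx
  simp only [Algebra.algebraMap_eq_smul_one, sub_mul, mul_sub, hx2, Algebra.smul_mul_assoc,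
    Algebra.mul_smul_comm, one_mul, mul_one, hx1]
  module

namespace IsPositiveStable

variable {x : A}

theorem isUnit (hx : IsPositiveStable x) : IsUnit x :=
  spectrum.zero_notMem_iff ℂ |>.mp fun h => (hx 0 h).ne' Complex.zero_re

theorem isUnit_sub_algebraMap (hx : IsPositiveStable x) {z : ℂ} (hz : z.re ≤ 0) :
    IsUnit (x - algebraMap ℂ A z) :=
  isUnit_sub_algebraMap_iff.mpr fun h => (hx z h).not_ge hz

theorem smul_add_smul_inverse (hx : IsPositiveStable x) {α β : ℝ} (hα : 0 < α) (hβ : 0 < β) :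
    IsPositiveStable (α • x + β • x⁻¹ʳ) := by
  intro μ hμ
  by_contra! hμ0
  have hα0 : (α : ℂ) ≠ 0 := by exact_mod_cast hα.ne'
  obtain ⟨a, b, hadd, hmul⟩ := exists_add_eq_mul_eq (μ / α) ((β / α : ℝ) : ℂ)
  have hre : (a + b).re ≤ 0 := by
    rw [hadd, Complex.div_ofReal_re]
    exact div_nonpos_of_nonpos_of_nonneg hμ0 hα.le
  have ha := re_nonpos_of_mul_eq_ofReal (div_pos hβ hα) hmul hre
  have hb := re_nonpos_of_mul_eq_ofReal (div_pos hβ hα) (mul_comm a b ▸ hmul)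
    (add_comm a b ▸ hre)
  have hfactor : (α : ℂ) • ((x - algebraMap ℂ A a) * (x - algebraMap ℂ A b) * x⁻¹ʳ) =
      α • x + β • x⁻¹ʳ - algebraMap ℂ A μ := by
    rw [sub_algebraMap_mul_sub_algebraMap_mul_inverse hx.isUnit, hadd, hmul,
      Algebra.algebraMap_eq_smul_one, Algebra.algebraMap_eq_smul_one, ← Complex.coe_smul α x,
      ← Complex.coe_smul β x⁻¹ʳ, smul_add, smul_sub, smul_smul, smul_smul, mul_div_cancel₀ _ hα0,
      Complex.ofReal_div, mul_div_cancel₀ _ hα0]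
    abel
  refine isUnit_sub_algebraMap_iff.mp (hfactor ▸ ?_) hμ
  exact (((hx.isUnit_sub_algebraMap ha).mul (hx.isUnit_sub_algebraMap hb)).mul
    hx.isUnit.ringInverse).smul (Units.mk0 _ hα0)

end IsPositiveStable

end ComplexAlgebra

section Cayley

variable {R : Type*} [Ring R]

/-- The Cayley transform `(1 + q)(1 - q)⁻¹`, taking the unit disk to the right half-plane; it is `0`
when `1 - q` is not a unit. -/
def cayley (q : R) : R := (1 + q) * (1 - q)⁻¹ʳ

theorem cayley_eq_iff {q y : R} (hq : IsUnit (1 - q)) : cayley q = y ↔ 1 + q = y * (1 - q) := by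
  rw [cayley, eq_comm, Ring.eq_mul_inverse_iff_mul_eq _ _ _ hq, eq_comm]

theorem cayley_mul_one_sub {q : R} (hq : IsUnit (1 - q)) : cayley q * (1 - q) = 1 + q :=
  ((cayley_eq_iff hq).mp rfl).symm

theorem inverse_cayley {q : R} (hq : IsUnit (1 - q)) :
    (cayley q)⁻¹ʳ = cayley (-q) := by
  rw [cayley, cayley, Ring.inverse_mul (.inr hq.ringInverse), Ring.inverse_inverse hq,
    sub_neg_eq_add, ← sub_eq_add_neg]

theorem units_mul_cayley_mul_inv (P : Rˣ) {q : R} (hq : IsUnit (1 - q)) :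
    P * cayley q * (↑P⁻¹ : R) = cayley (P * q * (↑P⁻¹ : R)) := by
  have hconj (r : R) : P * r * (↑P⁻¹ : R) * (1 - P * q * (↑P⁻¹ : R)) =
      P * (r * (1 - q)) * (↑P⁻¹ : R) := by
    simp [mul_sub, sub_mul, mul_assoc]
  have hunit : IsUnit (1 - P * q * (↑P⁻¹ : R)) := by
    have := hconj 1
    simp only [mul_one, Units.mul_inv, one_mul] at this
    exact this ▸ (P.isUnit.mul hq).mul P⁻¹.isUnit
  rw [eq_comm, cayley_eq_iff hunit, hconj, cayley_mul_one_sub hq, mul_add, add_mul, mul_one,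
    Units.mul_inv]

/-- The automorphism `(q + σ)(1 + σq)⁻¹` of the unit disk (for real `|σ| < 1`) applied to a ring
element; it is `0` when `1 + σq` is not a unit. -/
def diskMobius [Algebra ℝ R] (σ : ℝ) (q : R) : R := (q + σ • 1) * (1 + σ • q)⁻¹ʳ

/-- The damped Newton step `(1 - w)y + wy⁻¹` for the sign function, with `w = 1 / 2` the undamped
one; `y⁻¹ʳ` is `0` when `y` is not a unit. -/
def dampedNewton [Module ℝ R] (w : ℝ) (y : R) : R := (1 - w) • y + w • y⁻¹ʳ

theorem units_mul_dampedNewton_mul_inv [Algebra ℝ R] (P : Rˣ) (w : ℝ) (y : R) :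
    P * dampedNewton w y * (↑P⁻¹ : R) = dampedNewton w (P * y * (↑P⁻¹ : R)) := by
  rw [dampedNewton, dampedNewton, Ring.inverse_mul (.inr P⁻¹.isUnit),
    Ring.inverse_mul (.inl P.isUnit), Ring.inverse_unit, Ring.inverse_unit, inv_inv]
  simp only [mul_add, add_mul, mul_smul_comm, smul_mul_assoc, mul_assoc]

theorem dampedNewton_cayley [Algebra ℝ R] {q : R} {w : ℝ} (hp : IsUnit (1 + q))
    (hq : IsUnit (1 - q)) (hu : IsUnit (1 + (1 - 2 * w) • q)) :
    dampedNewton w (cayley q) = cayley (q * diskMobius (1 - 2 * w) q) := by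
  set σ := 1 - 2 * w with hσ
  set q' := q * diskMobius σ q with hq'
  have hq'u : q' * (1 + σ • q) = q * (q + σ • 1) := by
    rw [hq', diskMobius, ← mul_assoc, Ring.inverse_mul_cancel_right _ _ hu]
  have hden : (1 - q') * (1 + σ • q) = (1 - q) * (1 + q) := by
    rw [sub_mul, hq'u]
    simp only [mul_add, sub_mul, mul_smul_comm, mul_one, one_mul]
    abel
  have hnum : (1 + q') * (1 + σ • q) = 1 + (2 * σ) • q + q * q := by
    rw [add_mul, hq'u]
    simp only [mul_add, mul_smul_comm, mul_one, one_mul]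
    module
  have hunit : IsUnit (1 - q') := by
    obtain ⟨u, hu⟩ := hu
    rw [← hu] at hden
    rw [← Units.isUnit_mul_units _ u, hden]
    exact hq.mul hp
  have hinv : (cayley q)⁻¹ʳ * (1 + q) = 1 - q := by
    rw [inverse_cayley hq, cayley, sub_neg_eq_add, Ring.inverse_mul_cancel_right _ _ hp,
      sub_eq_add_neg]
  rw [dampedNewton, eq_comm, cayley_eq_iff hunit, ← hu.mul_left_inj, hnum, mul_assoc, hden, add_mul,
    smul_mul_assoc, smul_mul_assoc, ← mul_assoc, cayley_mul_one_sub hq,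
    (show (1 - q) * (1 + q) = (1 + q) * (1 - q) by noncomm_ring), ← mul_assoc, hinv, hσ]
  simp only [mul_add, add_mul, mul_sub, sub_mul, mul_one, one_mul]
  module

theorem re_one_add_div_one_sub_nonpos {z : ℂ} (hz : 1 ≤ ‖z‖) :
    ((1 + z) / (1 - z)).re ≤ 0 := by
  have hnorm : 1 ≤ z.re * z.re + z.im * z.im := by
    rw [← Complex.normSq_apply, Complex.normSq_eq_norm_sq]
    exact one_le_pow₀ hz
  have hre : ((1 + z) / (1 - z)).re =
      (1 - (z.re * z.re + z.im * z.im)) / Complex.normSq (1 - z) := by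
    simp only [Complex.div_re, Complex.add_re, Complex.sub_re, Complex.one_re, Complex.add_im,
      Complex.sub_im, Complex.one_im]
    ring
  rw [hre]
  exact div_nonpos_of_nonpos_of_nonneg (by linarith) (Complex.normSq_nonneg _)

theorem IsPositiveStable.exists_cayley_eq {A : Type*} [Ring A] [Algebra ℂ A] {x : A}
    (hx : IsPositiveStable x) : ∃ q : A, (∀ z ∈ spectrum ℂ q, ‖z‖ < 1) ∧ cayley q = x := by
  obtain ⟨u, hu⟩ : IsUnit (x + 1) := by
    simpa using hx.isUnit_sub_algebraMap (z := -1) (by simp)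
  obtain ⟨q, hqu⟩ : ∃ q, q * u = x - 1 := ⟨_, Units.inv_mul_cancel_right _ _⟩
  have hresolvent (z : ℂ) : (algebraMap ℂ A z - q) * u = (z - 1) • x + (z + 1) • (1 : A) := by
    rw [sub_mul, hqu, hu, Algebra.algebraMap_eq_smul_one, smul_mul_assoc, one_mul]
    module
  have hregular (z : ℂ) (hz : 1 ≤ ‖z‖) : IsUnit (algebraMap ℂ A z - q) := by
    rw [← Units.isUnit_mul_units _ u, hresolvent]
    rcases eq_or_ne z 1 with rfl | hz1
    · rw [sub_self, zero_smul, zero_add]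
      exact isUnit_one.smul (Units.mk0 (1 + 1 : ℂ) (by norm_num))
    · have hz0 : z - 1 ≠ 0 := sub_ne_zero.mpr hz1
      have hfactor : (z - 1) • x + (z + 1) • (1 : A) =
          (z - 1) • (x - algebraMap ℂ A ((1 + z) / (1 - z))) := by
        rw [Algebra.algebraMap_eq_smul_one, smul_sub, smul_smul, mul_div_assoc',
          ← neg_sub z 1, div_neg, mul_div_cancel_left₀ _ hz0, neg_smul, sub_neg_eq_add,
          add_comm 1 z]
      rw [hfactor]
      exact (hx.isUnit_sub_algebraMap (re_one_add_div_one_sub_nonpos hz)).smul (Units.mk0 _ hz0)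
  refine ⟨q, fun z hz => not_le.mp fun hz1 => hz (hregular z hz1), ?_⟩
  rw [cayley_eq_iff (by simpa using hregular 1 (by simp)), ← u.isUnit.mul_left_inj, mul_assoc,
    sub_mul, add_mul, hqu, hu]
  noncomm_ring

end Cayley

section CStarAlgebra

theorem exists_norm_pow_lt_one {A : Type*} [NormedRing A] [NormedAlgebra ℂ A] [CompleteSpace A]
    [Nontrivial A] {q : A} (hq : ∀ z ∈ spectrum ℂ q, ‖z‖ < 1) : ∃ m, 0 < m ∧ ‖q ^ m‖ < 1 := by
  have hradius : spectralRadius ℂ q < 1 := by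
    exact_mod_cast spectrum.spectralRadius_lt_of_forall_lt q (r := 1) hq
  obtain ⟨m, hroot, hm⟩ := (((spectrum.pow_norm_pow_one_div_tendsto_nhds_spectralRadius
    q).eventually (eventually_lt_nhds hradius)).and (eventually_gt_atTop 0)).exists
  refine ⟨m, hm, not_le.mp fun h => hroot.not_ge ?_⟩
  rw [← ENNReal.ofReal_one]
  exact ENNReal.ofReal_le_ofReal (Real.one_le_rpow h (by positivity))

theorem isUnit_one_add_smul {R : Type*} [NormedRing R] [NormedAlgebra ℝ R] [CompleteSpace R]
    {q : R} {σ : ℝ} (hq : ‖q‖ < 1) (hσ : |σ| ≤ 1) : IsUnit (1 + σ • q) := by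
  have hnorm : ‖-(σ • q)‖ < 1 := by
    rw [norm_neg, norm_smul, Real.norm_eq_abs]
    exact (mul_le_of_le_one_left (norm_nonneg q) hσ).trans_lt hq
  simpa using isUnit_one_sub_of_norm_lt_one hnorm

variable {A : Type*} [CStarAlgebra A]

theorem norm_mul_inverse_sq_le [PartialOrder A] [StarOrderedRing A] {a b : A} {r : ℝ} (hr : 0 ≤ r)
    (hb : IsUnit b) (h : star a * a ≤ r • (star b * b)) : ‖a * b⁻¹ʳ‖ ^ 2 ≤ r := by
  rw [sq, ← CStarRing.norm_star_mul_self,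
    CStarAlgebra.norm_le_iff_le_algebraMap _ hr (star_mul_self_nonneg _)]
  have hcancel : star b⁻¹ʳ * (r • (star b * b)) * b⁻¹ʳ = algebraMap ℝ A r := by
    rw [mul_smul_comm, smul_mul_assoc, ← mul_assoc, ← star_mul, Ring.mul_inverse_cancel b hb,
      star_one, one_mul, Ring.mul_inverse_cancel b hb, Algebra.algebraMap_eq_smul_one]
  calc star (a * b⁻¹ʳ) * (a * b⁻¹ʳ) = star b⁻¹ʳ * (star a * a) * b⁻¹ʳ := by
        rw [star_mul]; noncomm_ring
    _ ≤ star b⁻¹ʳ * (r • (star b * b)) * b⁻¹ʳ := star_left_conjugate_le_conjugate h _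
    _ = algebraMap ℝ A r := hcancel

variable [Nontrivial A]

-- `G = ∑ (qʲ)* qʲ` over `j < m` solves the Stein equation up to the remainder `(qᵐ)* qᵐ`.
theorem exists_star_mul_mul_le_smul [PartialOrder A] [StarOrderedRing A] {q : A}
    (hq : ∀ z ∈ spectrum ℂ q, ‖z‖ < 1) :
    ∃ G : A, 1 ≤ G ∧ ∃ r : ℝ, 0 ≤ r ∧ r < 1 ∧ star q * G * q ≤ r • G := by
  obtain ⟨m, hm, hqm⟩ := exists_norm_pow_lt_one hq
  set G : A := ∑ j ∈ Finset.range m, star (q ^ j) * q ^ j with hG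
  have hG1 : 1 ≤ G := by
    obtain ⟨l, rfl⟩ := Nat.exists_eq_add_one.mpr hm
    rw [hG, Finset.sum_range_succ', pow_zero, star_one, one_mul]
    exact le_add_of_nonneg_left (Finset.sum_nonneg fun _ _ => star_mul_self_nonneg _)
  have hG0 : 0 ≤ G := zero_le_one.trans hG1
  have htelescope : star q * G * q = G - 1 + star (q ^ m) * q ^ m := by
    rw [hG, Finset.mul_sum, Finset.sum_mul, sub_add_eq_add_sub, ← Finset.sum_range_succ,
      Finset.sum_range_succ', pow_zero, star_one, one_mul, add_sub_cancel_right]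
    refine Finset.sum_congr rfl fun j _ => ?_
    rw [pow_succ, star_mul]
    noncomm_ring
  have hGnorm : 1 ≤ ‖G‖ := by
    simpa using CStarAlgebra.norm_le_norm_of_nonneg_of_le zero_le_one hG1
  have hη : 0 < 1 - ‖q ^ m‖ ^ 2 := by nlinarith [norm_nonneg (q ^ m)]
  refine ⟨G, hG1, 1 - (1 - ‖q ^ m‖ ^ 2) / ‖G‖, ?_, by simpa using div_pos hη (by linarith), ?_⟩
  · rw [sub_nonneg, div_le_one (by linarith)]
    nlinarith [sq_nonneg ‖q ^ m‖]
  · have hpow : star (q ^ m) * q ^ m ≤ ‖q ^ m‖ ^ 2 • (1 : A) := by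
      rw [← Algebra.algebraMap_eq_smul_one]
      exact CStarAlgebra.star_mul_le_algebraMap_norm_sq
    have hGle : ((1 - ‖q ^ m‖ ^ 2) / ‖G‖) • G ≤ (1 - ‖q ^ m‖ ^ 2) • (1 : A) := by
      have := smul_le_smul_of_nonneg_left (hG0.isSelfAdjoint.le_algebraMap_norm_self)
        (div_nonneg hη.le (norm_nonneg G))
      rwa [Algebra.algebraMap_eq_smul_one, smul_smul, div_mul_cancel₀ _ (by linarith)] at this
    rw [htelescope, sub_smul 1, one_smul]
    calc G - 1 + star (q ^ m) * q ^ m ≤ G - 1 + ‖q ^ m‖ ^ 2 • (1 : A) := by gcongr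
      _ = G - (1 - ‖q ^ m‖ ^ 2) • (1 : A) := by module
      _ ≤ G - ((1 - ‖q ^ m‖ ^ 2) / ‖G‖) • G := by gcongr

theorem exists_norm_units_conj_lt_one {q : A} (hq : ∀ z ∈ spectrum ℂ q, ‖z‖ < 1) :
    ∃ P : Aˣ, ‖P * q * (↑P⁻¹ : A)‖ < 1 := by
  let _ := CStarAlgebra.spectralOrder A
  have _ := CStarAlgebra.spectralOrderedRing A
  obtain ⟨G, hG1, r, hr0, hr1, hG⟩ := exists_star_mul_mul_le_smul hq
  have hG0 : 0 ≤ G := zero_le_one.trans hG1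
  obtain ⟨P, hP⟩ : IsUnit (CFC.sqrt G) :=
    (CFC.isUnit_sqrt_iff G).mpr (CStarAlgebra.isUnit_of_le 1 hG1)
  have hstar : star (P : A) * P = G := by
    rw [hP, (CFC.sqrt_nonneg G).star_eq, CFC.sqrt_mul_sqrt_self G]
  refine ⟨P, ?_⟩
  have hle : ‖P * q * (↑P⁻¹ : A)‖ ^ 2 ≤ r := by
    rw [← Ring.inverse_unit]
    refine norm_mul_inverse_sq_le hr0 P.isUnit ?_
    calc star (P * q) * (P * q) = star q * (star (P : A) * P) * q := by
          rw [star_mul]; noncomm_ring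
      _ ≤ r • (star (P : A) * P) := by rwa [hstar]
  exact (sq_lt_one_iff₀ (norm_nonneg _)).mp (hle.trans_lt hr1)

theorem star_mul_self_one_add_smul_sub {R : Type*} [Ring R] [StarRing R] [Algebra ℝ R]
    [StarModule ℝ R] (σ : ℝ) (q : R) :
    star (1 + σ • q) * (1 + σ • q) - star (q + σ • 1) * (q + σ • 1) =
      (1 - σ ^ 2) • (1 - star q * q) := by
  simp only [star_add, star_smul, star_one, star_trivial, add_mul, mul_add, smul_mul_assoc,
    mul_smul_comm, mul_one, one_mul]
  module

theorem norm_diskMobius_sq_le {q : A} {σ : ℝ} (hq : ‖q‖ < 1) (hσ : |σ| ≤ 1) :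
    ‖diskMobius σ q‖ ^ 2 ≤ 1 - (1 - σ ^ 2) * (1 - ‖q‖ ^ 2) / 4 := by
  let _ := CStarAlgebra.spectralOrder A
  have _ := CStarAlgebra.spectralOrderedRing A
  have hσ2 : 0 ≤ 1 - σ ^ 2 := sub_nonneg.mpr ((sq_le_one_iff_abs_le_one σ).mpr hσ)
  have hq2 : 0 ≤ 1 - ‖q‖ ^ 2 := by nlinarith [norm_nonneg q]
  set a := q + σ • 1
  set b := 1 + σ • q
  have hb : star b * b ≤ (4 : ℝ) • (1 : A) := by
    have hnorm : ‖b‖ ≤ 2 := by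
      refine (norm_add_le _ _).trans ?_
      rw [norm_one, norm_smul, Real.norm_eq_abs]
      nlinarith [norm_nonneg q, abs_nonneg σ]
    rw [← Algebra.algebraMap_eq_smul_one]
    refine CStarAlgebra.star_mul_le_algebraMap_norm_sq.trans (algebraMap_mono A ?_)
    nlinarith [norm_nonneg b]
  have hq1 : star q * q ≤ ‖q‖ ^ 2 • (1 : A) := by
    rw [← Algebra.algebraMap_eq_smul_one]
    exact CStarAlgebra.star_mul_le_algebraMap_norm_sq
  refine norm_mul_inverse_sq_le (by nlinarith) (isUnit_one_add_smul hq hσ) ?_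
  calc star a * a = star b * b - (1 - σ ^ 2) • (1 - star q * q) := by
        rw [← star_mul_self_one_add_smul_sub, sub_sub_cancel]
    _ ≤ star b * b - (1 - σ ^ 2) • ((1 - ‖q‖ ^ 2) • (1 : A)) := by
        rw [sub_smul 1 (‖q‖ ^ 2), one_smul]
        gcongr
    _ = star b * b - ((1 - σ ^ 2) * (1 - ‖q‖ ^ 2) / 4) • ((4 : ℝ) • (1 : A)) := by
        module
    _ ≤ star b * b - ((1 - σ ^ 2) * (1 - ‖q‖ ^ 2) / 4) • (star b * b) := by
        gcongr
    _ = (1 - (1 - σ ^ 2) * (1 - ‖q‖ ^ 2) / 4) • (star b * b) := by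
        rw [sub_smul, one_smul]

end CStarAlgebra

section NormedCayley

variable {R : Type*} [NormedRing R] [CompleteSpace R]

theorem norm_cayley_le [NormOneClass R] {q : R} {ρ : ℝ} (hq : ‖q‖ ≤ ρ) (hρ : ρ < 1) :
    ‖cayley q‖ ≤ (1 + ρ) / (1 - ρ) := by
  have hcayley : cayley q = 1 + q + cayley q * q := by
    have := cayley_mul_one_sub (isUnit_one_sub_of_norm_lt_one (hq.trans_lt hρ))
    rw [← this]
    noncomm_ring
  have hnorm : ‖cayley q‖ ≤ 1 + ‖q‖ + ‖cayley q‖ * ‖q‖ :=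
    calc ‖cayley q‖ = ‖1 + q + cayley q * q‖ := congrArg _ hcayley
      _ ≤ ‖(1 : R)‖ + ‖q‖ + ‖cayley q‖ * ‖q‖ :=
        norm_add_le_of_le (norm_add_le _ _) (norm_mul_le _ _)
      _ = 1 + ‖q‖ + ‖cayley q‖ * ‖q‖ := by rw [norm_one]
  rw [le_div_iff₀ (by linarith)]
  nlinarith [norm_nonneg (cayley q)]

theorem tendsto_cayley_of_tendsto_zero {ι : Type*} {l : Filter ι} {q : ι → R}
    (hq : Tendsto q l (𝓝 0)) : Tendsto (fun i => cayley (q i)) l (𝓝 1) := by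
  have hnum : Tendsto (fun i => 1 + q i) l (𝓝 1) := by simpa using hq.const_add 1
  have hden : Tendsto (fun i => 1 - q i) l (𝓝 1) := by simpa using hq.const_sub 1
  have hinv := (NormedRing.inverse_continuousAt (1 : Rˣ)).tendsto.comp hden
  simpa [cayley] using hnum.mul hinv

end NormedCayley

section DampedNewton

variable {A : Type*} [CStarAlgebra A] [Nontrivial A]

theorem norm_mul_diskMobius_le {q : A} {ρ ε w : ℝ} (hq : ‖q‖ ≤ ρ) (hρ : ρ < 1) (hε : 0 ≤ ε)
    (hw : w ∈ Set.Icc ε (1 - ε)) :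
    ‖q * diskMobius (1 - 2 * w) q‖ ≤ √(1 - ε * (1 - ε) * (1 - ρ ^ 2)) * ‖q‖ := by
  obtain ⟨hwε, hw1⟩ := hw
  have hσ : |1 - 2 * w| ≤ 1 := abs_le.mpr ⟨by linarith, by linarith⟩
  rw [mul_comm √_]
  refine (norm_mul_le _ _).trans (mul_le_mul_of_nonneg_left (Real.le_sqrt_of_sq_le ?_)
    (norm_nonneg q))
  refine (norm_diskMobius_sq_le (hq.trans_lt hρ) hσ).trans ?_
  have hww : ε * (1 - ε) ≤ w * (1 - w) := by nlinarith
  have hqρ : 1 - ρ ^ 2 ≤ 1 - ‖q‖ ^ 2 := by gcongr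
  have hρ2 : 0 ≤ 1 - ρ ^ 2 := by nlinarith [norm_nonneg q]
  nlinarith [mul_le_mul hww hqρ hρ2 (by nlinarith)]

variable {Y : ℕ → A} {w : ℕ → ℝ}

theorem exists_units_conj_eq_cayley (h0 : IsPositiveStable (Y 0))
    (hY : ∀ k, Y (k + 1) = dampedNewton (w k) (Y k)) {ε : ℝ} (hε : 0 ≤ ε)
    (hw : ∀ k, w k ∈ Set.Icc ε (1 - ε)) :
    ∃ (P : Aˣ) (ρ : ℝ), 0 ≤ ρ ∧ ρ < 1 ∧ ∀ k, ∃ q : A,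
      ‖q‖ ≤ √(1 - ε * (1 - ε) * (1 - ρ ^ 2)) ^ k * ρ ∧ P * Y k * (↑P⁻¹ : A) = cayley q := by
  obtain ⟨q₀, hspec, hq₀⟩ := h0.exists_cayley_eq
  obtain ⟨P, hP⟩ := exists_norm_units_conj_lt_one hspec
  set ρ := ‖P * q₀ * (↑P⁻¹ : A)‖
  set θ := √(1 - ε * (1 - ε) * (1 - ρ ^ 2))
  have hρ0 : 0 ≤ ρ := norm_nonneg _
  have hθ : θ ≤ 1 := by
    refine Real.sqrt_le_one.mpr ?_
    have hε1 : 0 ≤ 1 - ε := by linarith [(hw 0).1, (hw 0).2]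
    have hρ2 : 0 ≤ 1 - ρ ^ 2 := by nlinarith
    linarith [mul_nonneg (mul_nonneg hε hε1) hρ2]
  refine ⟨P, ρ, hρ0, hP, fun k => ?_⟩
  induction k with
  | zero =>
    have hq₀1 : IsUnit (1 - q₀) := by
      simpa using spectrum.notMem_iff.mp fun h => (hspec 1 h).ne norm_one
    exact ⟨P * q₀ * (↑P⁻¹ : A), by simp [ρ], by rw [← hq₀, units_mul_cayley_mul_inv P hq₀1]⟩
  | succ k ih =>
    obtain ⟨q, hq, hYq⟩ := ih
    have hqρ : ‖q‖ ≤ ρ :=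
      hq.trans (mul_le_of_le_one_left hρ0 (pow_le_one₀ (Real.sqrt_nonneg _) hθ))
    have hq1 : ‖q‖ < 1 := hqρ.trans_lt hP
    refine ⟨q * diskMobius (1 - 2 * w k) q, ?_, ?_⟩
    · rw [pow_succ', mul_assoc]
      exact (norm_mul_diskMobius_le hqρ hP hε (hw k)).trans
        (mul_le_mul_of_nonneg_left hq (Real.sqrt_nonneg _))
    · have hσ : |1 - 2 * w k| ≤ 1 := abs_le.mpr ⟨by linarith [(hw k).2], by linarith [(hw k).1]⟩
      rw [hY, units_mul_dampedNewton_mul_inv, hYq, dampedNewton_cayley _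
        (isUnit_one_sub_of_norm_lt_one hq1) (isUnit_one_add_smul hq1 hσ)]
      simpa using isUnit_one_add_smul hq1 (σ := 1) (by simp)

theorem exists_norm_dampedNewton_le (h0 : IsPositiveStable (Y 0))
    (hY : ∀ k, Y (k + 1) = dampedNewton (w k) (Y k)) (hw : ∀ k, w k ∈ Set.Icc 0 1) :
    ∃ C, ∀ k, ‖Y k‖ ≤ C ∧ ‖(Y k)⁻¹ʳ‖ ≤ C := by
  obtain ⟨P, ρ, _, hρ1, hq⟩ := exists_units_conj_eq_cayley h0 hY le_rfl (by simpa using hw)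
  refine ⟨‖(↑P⁻¹ : A)‖ * ((1 + ρ) / (1 - ρ)) * ‖(P : A)‖, fun k => ?_⟩
  obtain ⟨q, hqρ, hYq⟩ := hq k
  replace hqρ : ‖q‖ ≤ ρ := by simpa using hqρ
  have hYk : Y k = (↑P⁻¹ : A) * cayley q * P := by
    rw [← hYq]
    simp [mul_assoc]
  have hYinv : (Y k)⁻¹ʳ = (↑P⁻¹ : A) * cayley (-q) * P := by
    rw [← inverse_cayley (isUnit_one_sub_of_norm_lt_one (hqρ.trans_lt hρ1)), hYk,
      Ring.inverse_mul (.inr P.isUnit), Ring.inverse_mul (.inl P⁻¹.isUnit), Ring.inverse_unit,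
      Ring.inverse_unit, inv_inv, mul_assoc]
  constructor
  · rw [hYk]
    exact norm_mul₃_le.trans (by gcongr; exact norm_cayley_le hqρ hρ1)
  · rw [hYinv]
    exact norm_mul₃_le.trans (by gcongr; exact norm_cayley_le ((norm_neg q).trans_le hqρ) hρ1)

theorem tendsto_dampedNewton (h0 : IsPositiveStable (Y 0))
    (hY : ∀ k, Y (k + 1) = dampedNewton (w k) (Y k)) {ε : ℝ} (hε : 0 < ε)
    (hw : ∀ k, w k ∈ Set.Icc ε (1 - ε)) : Tendsto Y atTop (𝓝 1) := by
  obtain ⟨P, ρ, hρ0, hρ1, hq⟩ := exists_units_conj_eq_cayley h0 hY hε.le hw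
  choose q hqle hYq using hq
  have hθ : √(1 - ε * (1 - ε) * (1 - ρ ^ 2)) < 1 := by
    have hε1 : 0 < 1 - ε := by linarith [(hw 0).1, (hw 0).2]
    have hρ2 : 0 < 1 - ρ ^ 2 := by nlinarith [hρ0]
    rw [Real.sqrt_lt' one_pos, one_pow]
    linarith [mul_pos (mul_pos hε hε1) hρ2]
  have hq0 : Tendsto q atTop (𝓝 0) := by
    refine squeeze_zero_norm hqle ?_
    simpa using (tendsto_pow_atTop_nhds_zero_of_lt_one (Real.sqrt_nonneg _) hθ).mul_const ρ
  have hYcayley (k : ℕ) : (↑P⁻¹ : A) * cayley (q k) * P = Y k := by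
    rw [← hYq]
    simp [mul_assoc]
  have hconj := ((tendsto_cayley_of_tendsto_zero hq0).const_mul (↑P⁻¹ : A)).mul_const (P : A)
  simpa [hYcayley] using hconj

end DampedNewton

section ScaledNewton

theorem map_inverse_of_isUnit {R S F : Type*} [MonoidWithZero R] [MonoidWithZero S] [FunLike F R S]
    [MonoidHomClass F R S] (f : F) {x : R} (hx : IsUnit x) : f x⁻¹ʳ = (f x)⁻¹ʳ := by
  obtain ⟨u, rfl⟩ := hx
  rw [Ring.inverse_unit]
  exact (Ring.inverse_unit (Units.map (f : R →* S) u)).symm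

theorem inverse_smul {𝕜 R : Type*} [Field 𝕜] [Ring R] [Algebra 𝕜 R] {r : 𝕜} (hr : r ≠ 0) (x : R) :
    (r • x)⁻¹ʳ = r⁻¹ • x⁻¹ʳ := by
  rw [Algebra.smul_def, Ring.inverse_mul (.inl (hr.isUnit.map (algebraMap 𝕜 R))),
    ← map_inverse_of_isUnit (algebraMap 𝕜 R) hr.isUnit, Ring.inverse_eq_inv, Algebra.smul_def,
    Algebra.commutes]

section Algebraic

variable {R : Type*} [Ring R] [Algebra ℝ R] (ν : Seminorm ℝ R)

/-- The scaling factor `(ν(x) / ν(x⁻¹))^{1/2}` of the sign iteration, the paper's `c_k` at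
`x = -ℰ⁻¹A_k` when `ν` is the norm pulled back along multiplication by `ℰ`. -/
def newtonScaling (x : R) : ℝ := √(ν x / ν x⁻¹ʳ)

/-- One step `x ↦ x / (2c) + (c / 2)x⁻¹` of the scaled Newton sign iteration. -/
def scaledNewton (x : R) : R :=
  (1 / (2 * newtonScaling ν x)) • x + (newtonScaling ν x / 2) • x⁻¹ʳ

/-- The scaled Newton step rescaled by a positive factor so that its coefficients sum to `1`: a
damped Newton step whose weight depends on the current point. -/
def balancedNewton (y : R) : R := dampedNewton (ν y / (ν y + ν y⁻¹ʳ)) y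

theorem newtonScaling_smul {r : ℝ} (hr : 0 < r) (x : R) :
    newtonScaling ν (r • x) = r * newtonScaling ν x := by
  rw [newtonScaling, newtonScaling, inverse_smul hr.ne', map_smul_eq_mul, map_smul_eq_mul,
    Real.norm_of_nonneg hr.le, Real.norm_of_nonneg (inv_nonneg.mpr hr.le), mul_div_mul_comm,
    div_inv_eq_mul, Real.sqrt_mul (mul_self_nonneg r), Real.sqrt_mul_self hr.le]

theorem scaledNewton_smul {r : ℝ} (hr : 0 < r) (x : R) :
    scaledNewton ν (r • x) = scaledNewton ν x := by
  rw [scaledNewton, scaledNewton, newtonScaling_smul ν hr, inverse_smul hr.ne', smul_smul,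
    smul_smul]
  congr 2 <;> field_simp

variable {ν} [Nontrivial R]

theorem seminorm_pos_of_isUnit (hν : ∀ x, ν x = 0 → x = 0) {x : R} (hx : IsUnit x) : 0 < ν x :=
  (apply_nonneg ν x).lt_of_ne' fun h => hx.ne_zero (hν x h)

theorem newtonScaling_pos (hν : ∀ x, ν x = 0 → x = 0) {x : R} (hx : IsUnit x) :
    0 < newtonScaling ν x :=
  Real.sqrt_pos.mpr <|
    div_pos (seminorm_pos_of_isUnit hν hx) (seminorm_pos_of_isUnit hν hx.ringInverse)

theorem exists_scaledNewton_eq_smul_balancedNewton (hν : ∀ x, ν x = 0 → x = 0) {x : R}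
    (hx : IsUnit x) : ∃ r : ℝ, 0 < r ∧ scaledNewton ν x = r • balancedNewton ν x := by
  set g := newtonScaling ν x with hg
  have hg0 : 0 < g := newtonScaling_pos hν hx
  have hpos := seminorm_pos_of_isUnit hν hx
  have hpos_inv := seminorm_pos_of_isUnit hν hx.ringInverse
  have hg2 : ν x = g ^ 2 * ν x⁻¹ʳ := by
    rw [hg, newtonScaling, Real.sq_sqrt (by positivity), div_mul_cancel₀ _ hpos_inv.ne']
  refine ⟨(g ^ 2 + 1) / (2 * g), by positivity, ?_⟩
  rw [scaledNewton, balancedNewton, dampedNewton, hg2, ← hg, smul_add, smul_smul, smul_smul]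
  congr 2
  · field_simp
    ring
  · field_simp

end Algebraic

section Complex

variable {A : Type*} [Ring A] [Algebra ℂ A] [Nontrivial A] {ν : Seminorm ℝ A} {x : A}

theorem isPositiveStable_scaledNewton (hν : ∀ y, ν y = 0 → y = 0) (hx : IsPositiveStable x) :
    IsPositiveStable (scaledNewton ν x) := by
  have hg := newtonScaling_pos hν hx.isUnit
  exact hx.smul_add_smul_inverse (by positivity) (by positivity)

theorem isPositiveStable_balancedNewton (hν : ∀ y, ν y = 0 → y = 0) (hx : IsPositiveStable x) :
    IsPositiveStable (balancedNewton ν x) := by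
  have hpos := seminorm_pos_of_isUnit hν hx.isUnit
  have hpos_inv := seminorm_pos_of_isUnit hν hx.isUnit.ringInverse
  refine hx.smul_add_smul_inverse (sub_pos.mpr ?_) (by positivity)
  exact (div_lt_one (by positivity)).mpr (by linarith)

theorem isPositiveStable_iterate_scaledNewton (hν : ∀ y, ν y = 0 → y = 0)
    (hx : IsPositiveStable x) (k : ℕ) : IsPositiveStable ((scaledNewton ν)^[k] x) :=
  Function.Iterate.rec IsPositiveStable hx (fun _ => isPositiveStable_scaledNewton hν) k

theorem isPositiveStable_iterate_balancedNewton (hν : ∀ y, ν y = 0 → y = 0)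
    (hx : IsPositiveStable x) (k : ℕ) : IsPositiveStable ((balancedNewton ν)^[k] x) :=
  Function.Iterate.rec IsPositiveStable hx (fun _ => isPositiveStable_balancedNewton hν) k

theorem scaledNewton_iterate_balancedNewton (hν : ∀ y, ν y = 0 → y = 0) (hx : IsPositiveStable x)
    (k : ℕ) : scaledNewton ν ((balancedNewton ν)^[k] x) = (scaledNewton ν)^[k + 1] x := by
  induction k with
  | zero => rfl
  | succ k ih =>
    obtain ⟨r, hr, hstep⟩ := exists_scaledNewton_eq_smul_balancedNewton hν
      (isPositiveStable_iterate_balancedNewton hν hx k).isUnit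
    rw [Function.iterate_succ_apply', Function.iterate_succ_apply', ← ih, hstep,
      scaledNewton_smul ν hr]

end Complex

section NormedAlgebra

theorem seminorm_definite_of_mul_norm_le {E : Type*} [NormedAddCommGroup E] [NormedSpace ℝ E]
    {ν : Seminorm ℝ E} {m : ℝ} (hm : 0 < m) (hν : ∀ y, m * ‖y‖ ≤ ν y) (y : E) (hy : ν y = 0) :
    y = 0 :=
  norm_le_zero_iff.mp (nonpos_of_mul_nonpos_right ((hν y).trans_eq hy) hm)

variable {R : Type*} [NormedRing R] [NormedAlgebra ℝ R] {ν : Seminorm ℝ R}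

theorem tendsto_scaledNewton_one [CompleteSpace R] (hcont : Continuous ν) (hν1 : ν 1 ≠ 0) :
    Tendsto (scaledNewton ν) (𝓝 1) (𝓝 1) := by
  have hinv : Tendsto (fun y : R => y⁻¹ʳ) (𝓝 1) (𝓝 1) := by
    have := (NormedRing.inverse_continuousAt (1 : Rˣ)).tendsto
    rwa [Units.val_one, Ring.inverse_one] at this
  have hscaling : Tendsto (newtonScaling ν) (𝓝 1) (𝓝 1) := by
    have := ((hcont.tendsto 1).div ((hcont.tendsto 1).comp hinv) hν1).sqrt
    rwa [div_self hν1, Real.sqrt_one] at this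
  have hcoeff : Tendsto (fun y => 1 / (2 * newtonScaling ν y)) (𝓝 1) (𝓝 (1 / 2)) := by
    simpa using (hscaling.const_mul 2).inv₀ (by norm_num)
  have hsum := (hcoeff.smul tendsto_id).add ((hscaling.div_const 2).smul hinv)
  rwa [← add_smul, add_halves, one_smul] at hsum

variable [NormOneClass R] {m : ℝ}

theorem div_le_seminorm_div_add (hm : 0 < m) (hν : ∀ y, m * ‖y‖ ≤ ν y) {M : ℝ}
    (hνM : ∀ y, ν y ≤ M * ‖y‖) {C : ℝ} {y : R} (hy : IsUnit y) (hyC : ‖y‖ ≤ C)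
    (hyC' : ‖y⁻¹ʳ‖ ≤ C) : m / (2 * M * C ^ 2) ≤ ν y / (ν y + ν y⁻¹ʳ) := by
  have : Nontrivial R := NormOneClass.nontrivial
  have hnorm : 0 < ‖y‖ := norm_pos_iff.mpr hy.ne_zero
  have hνy : 0 < ν y := (mul_pos hm hnorm).trans_le (hν y)
  have hC : 0 < C := hnorm.trans_le hyC
  have hM : 0 < M := pos_of_mul_pos_left (hνy.trans_le (hνM y)) hnorm.le
  have hone : 1 ≤ ‖y‖ * C :=
    calc 1 = ‖y * y⁻¹ʳ‖ := by rw [Ring.mul_inverse_cancel y hy, norm_one]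
      _ ≤ ‖y‖ * ‖y⁻¹ʳ‖ := norm_mul_le _ _
      _ ≤ ‖y‖ * C := by gcongr
  have hnum : m / C ≤ ν y := by
    refine le_trans ?_ (hν y)
    rw [div_le_iff₀ hC, mul_assoc]
    exact le_mul_of_one_le_right hm.le hone
  have hden : ν y + ν y⁻¹ʳ ≤ 2 * M * C := by
    have hle := (hνM y).trans (mul_le_mul_of_nonneg_left hyC hM.le)
    have hle_inv := (hνM y⁻¹ʳ).trans (mul_le_mul_of_nonneg_left hyC' hM.le)
    linarith
  calc m / (2 * M * C ^ 2) = m / C / (2 * M * C) := by field_simp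
    _ ≤ ν y / (ν y + ν y⁻¹ʳ) :=
      div_le_div₀ hνy.le hnum (add_pos_of_pos_of_nonneg hνy (apply_nonneg ν _)) hden

theorem exists_seminorm_div_add_mem_Icc (hcont : Continuous ν) (hm : 0 < m)
    (hν : ∀ y, m * ‖y‖ ≤ ν y) {C : ℝ} (hC : 0 < C) :
    ∃ ε, 0 < ε ∧ ∀ y : R, IsUnit y → ‖y‖ ≤ C → ‖y⁻¹ʳ‖ ≤ C →
      ν y / (ν y + ν y⁻¹ʳ) ∈ Set.Icc ε (1 - ε) := by
  have : Nontrivial R := NormOneClass.nontrivial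
  obtain ⟨M, hM, hνM⟩ := ν.bound_of_continuous_normedSpace hcont
  refine ⟨m / (2 * M * C ^ 2), by positivity, fun y hy hyC hyC' =>
    ⟨div_le_seminorm_div_add hm hν hνM hy hyC hyC', ?_⟩⟩
  have hcomplement : ν y / (ν y + ν y⁻¹ʳ) = 1 - ν y⁻¹ʳ / (ν y⁻¹ʳ + ν y) := by
    have := seminorm_pos_of_isUnit (seminorm_definite_of_mul_norm_le hm hν) hy
    field_simp
    ring
  have hlower := div_le_seminorm_div_add hm hν hνM hy.ringInverse hyC'
    (by rwa [Ring.inverse_inverse hy])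
  rw [Ring.inverse_inverse hy] at hlower
  rw [hcomplement]
  gcongr

end NormedAlgebra

section CStarAlgebra

variable {A : Type*} [CStarAlgebra A] [Nontrivial A] {ν : Seminorm ℝ A} {m : ℝ} {x : A}

theorem tendsto_iterate_balancedNewton (hcont : Continuous ν) (hm : 0 < m)
    (hν : ∀ y, m * ‖y‖ ≤ ν y) (hx : IsPositiveStable x) :
    Tendsto (fun k => (balancedNewton ν)^[k] x) atTop (𝓝 1) := by
  set Y := fun k => (balancedNewton ν)^[k] x
  have hY (k : ℕ) : Y (k + 1) = dampedNewton (ν (Y k) / (ν (Y k) + ν (Y k)⁻¹ʳ)) (Y k) :=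
    Function.iterate_succ_apply' _ _ _
  have hunit (k : ℕ) : IsUnit (Y k) := (isPositiveStable_iterate_balancedNewton
    (seminorm_definite_of_mul_norm_le hm hν) hx k).isUnit
  obtain ⟨C, hC⟩ := exists_norm_dampedNewton_le hx hY fun k =>
    ⟨by positivity, div_le_one_of_le₀ (by simp) (by positivity)⟩
  have hC0 : 0 < C := (norm_pos_iff.mpr (hunit 0).ne_zero).trans_le (hC 0).1
  obtain ⟨ε, hε, hweight⟩ := exists_seminorm_div_add_mem_Icc hcont hm hν hC0
  exact tendsto_dampedNewton hx hY hε fun k => hweight _ (hunit k) (hC k).1 (hC k).2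

theorem tendsto_iterate_scaledNewton (hcont : Continuous ν) (hm : 0 < m)
    (hν : ∀ y, m * ‖y‖ ≤ ν y) (hx : IsPositiveStable x) :
    Tendsto (fun k => (scaledNewton ν)^[k] x) atTop (𝓝 1) := by
  have hdef := seminorm_definite_of_mul_norm_le hm hν
  rw [← tendsto_add_atTop_iff_nat 1]
  simp only [← scaledNewton_iterate_balancedNewton hdef hx]
  exact (tendsto_scaledNewton_one hcont (mt (hdef 1) one_ne_zero)).comp
    (tendsto_iterate_balancedNewton hcont hm hν hx)

end CStarAlgebra

end ScaledNewton

section Matrix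

theorem exists_mul_norm_le_seminorm {E : Type*} [NormedAddCommGroup E] [NormedSpace ℝ E]
    [FiniteDimensional ℝ E] {ν : Seminorm ℝ E} (hcont : Continuous ν)
    (hν : ∀ x, ν x = 0 → x = 0) : ∃ m, 0 < m ∧ ∀ x, m * ‖x‖ ≤ ν x := by
  rcases subsingleton_or_nontrivial E with h | h
  · exact ⟨1, one_pos, fun x => by simp [Subsingleton.elim x 0]⟩
  obtain ⟨e, he, hmin⟩ := (isCompact_sphere (0 : E) 1).exists_isMinOn
    (NormedSpace.sphere_nonempty.mpr zero_le_one) hcont.continuousOn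
  have he0 : e ≠ 0 := ne_zero_of_mem_unit_sphere ⟨e, he⟩
  refine ⟨ν e, (apply_nonneg ν e).lt_of_ne' (mt (hν e) he0), fun x => ?_⟩
  rcases eq_or_ne x 0 with rfl | hx
  · simp
  have hsphere : ‖x‖⁻¹ • x ∈ Metric.sphere (0 : E) 1 := by
    simp [norm_smul, hx]
  have hle : ν e ≤ ‖x‖⁻¹ * ν x := by
    simpa [map_smul_eq_mul] using isMinOn_iff.mp hmin _ hsphere
  rwa [← div_eq_inv_mul, le_div_iff₀ (norm_pos_iff.mpr hx)] at hle

variable {n : Type*}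

/-- The extension `X + iY ↦ ν(X) + ν(Y)` of a seminorm to complex matrices. It is a seminorm over
`ℝ` only, which suffices because the iteration scales by real factors. -/
def complexifySeminorm (ν : Seminorm ℝ (Matrix n n ℝ)) : Seminorm ℝ (Matrix n n ℂ) :=
  ν.comp Complex.reLm.mapMatrix + ν.comp Complex.imLm.mapMatrix

variable {ν : Seminorm ℝ (Matrix n n ℝ)}

theorem complexifySeminorm_apply (Z : Matrix n n ℂ) :
    complexifySeminorm ν Z = ν (Z.map Complex.re) + ν (Z.map Complex.im) :=
  rfl

theorem complexifySeminorm_map_ofReal (M : Matrix n n ℝ) :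
    complexifySeminorm ν (M.map Complex.ofReal) = ν M := by
  have hre : (M.map Complex.ofReal).map Complex.re = M := by ext; simp
  have him : (M.map Complex.ofReal).map Complex.im = 0 := by ext; simp
  rw [complexifySeminorm_apply, hre, him, map_zero, add_zero]

theorem complexifySeminorm_definite (hν : ∀ M, ν M = 0 → M = 0) (Z : Matrix n n ℂ)
    (hZ : complexifySeminorm ν Z = 0) : Z = 0 := by
  obtain ⟨hre, him⟩ := (add_eq_zero_iff_of_nonneg (apply_nonneg ν _) (apply_nonneg ν _)).mp hZ
  ext i j
  exact Complex.ext (congrFun₂ (hν _ hre) i j) (congrFun₂ (hν _ him) i j)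

variable [Fintype n] [DecidableEq n]

theorem isUnit_map_ofReal_iff {M : Matrix n n ℝ} : IsUnit (M.map Complex.ofReal) ↔ IsUnit M := by
  have hdet : (M.map Complex.ofReal).det = (M.det : ℂ) := (Complex.ofRealHom.map_det M).symm
  rw [Matrix.isUnit_iff_isUnit_det, Matrix.isUnit_iff_isUnit_det, hdet, isUnit_iff_ne_zero,
    isUnit_iff_ne_zero, Complex.ofReal_ne_zero]

theorem map_ofReal_scaledNewton {M : Matrix n n ℝ} (hM : IsUnit M) :
    (scaledNewton ν M).map Complex.ofReal =
      scaledNewton (complexifySeminorm ν) (M.map Complex.ofReal) := by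
  have hinv : M⁻¹ʳ.map Complex.ofReal = (M.map Complex.ofReal)⁻¹ʳ :=
    map_inverse_of_isUnit Complex.ofRealHom.mapMatrix hM
  have hscaling : newtonScaling (complexifySeminorm ν) (M.map Complex.ofReal) =
      newtonScaling ν M := by
    rw [newtonScaling, newtonScaling, ← hinv, complexifySeminorm_map_ofReal,
      complexifySeminorm_map_ofReal]
  rw [scaledNewton, scaledNewton, hscaling, ← hinv]
  ext i j
  simp

variable [Nonempty n]

theorem map_ofReal_iterate_scaledNewton (hν : ∀ M, ν M = 0 → M = 0) {M : Matrix n n ℝ}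
    (hM : IsPositiveStable (M.map Complex.ofReal)) (k : ℕ) :
    ((scaledNewton ν)^[k] M).map Complex.ofReal =
      (scaledNewton (complexifySeminorm ν))^[k] (M.map Complex.ofReal) := by
  induction k with
  | zero => rfl
  | succ k ih =>
    have hunit : IsUnit ((scaledNewton ν)^[k] M) := by
      rw [← isUnit_map_ofReal_iff, ih]
      exact (isPositiveStable_iterate_scaledNewton (complexifySeminorm_definite hν) hM k).isUnit
    rw [Function.iterate_succ_apply', Function.iterate_succ_apply', map_ofReal_scaledNewton hunit,
      ih]

theorem isPositiveStable_map_iterate_scaledNewton (hν : ∀ M, ν M = 0 → M = 0)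
    {M : Matrix n n ℝ} (hM : IsPositiveStable (M.map Complex.ofReal)) (k : ℕ) :
    IsPositiveStable (((scaledNewton ν)^[k] M).map Complex.ofReal) :=
  map_ofReal_iterate_scaledNewton hν hM k ▸
    isPositiveStable_iterate_scaledNewton (complexifySeminorm_definite hν) hM k

open scoped Matrix.Norms.L2Operator in
theorem tendsto_iterate_scaledNewton_matrix (hν : ∀ M, ν M = 0 → M = 0) {M : Matrix n n ℝ}
    (hM : IsPositiveStable (M.map Complex.ofReal)) :
    Tendsto (fun k => (scaledNewton ν)^[k] M) atTop (𝓝 1) := by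
  have hcont : Continuous (complexifySeminorm ν) :=
    (complexifySeminorm ν).convexOn.locallyLipschitz.continuous
  obtain ⟨m, hm, hmν⟩ := exists_mul_norm_le_seminorm hcont (complexifySeminorm_definite hν)
  have hlim := tendsto_iterate_scaledNewton hcont hm hmν hM
  simp only [← map_ofReal_iterate_scaledNewton hν hM] at hlim
  have hre :=
    ((continuous_id.matrix_map Complex.continuous_re).tendsto (1 : Matrix n n ℂ)).comp hlim
  have hleft (L : Matrix n n ℝ) : (L.map Complex.ofReal).map Complex.re = L := by ext; simp
  simpa [Function.comp_def, hleft] using hre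

end Matrix

section Pencil

variable {N : ℕ} {ℰ X : Matrix (Fin N) (Fin N) ℝ}

theorem cStablePencil_neg_mul_iff (hE : IsUnit ℰ) :
    CStablePencil ℰ (-(ℰ * X)) ↔ IsPositiveStable (X.map Complex.ofReal) := by
  have hfactor (μ : ℂ) : μ • ℰ.map Complex.ofReal - (-(ℰ * X)).map Complex.ofReal =
      -(ℰ.map Complex.ofReal * (algebraMap ℂ _ (-μ) - X.map Complex.ofReal)) := by
    have hmul : (-(ℰ * X)).map Complex.ofReal = -(ℰ.map Complex.ofReal * X.map Complex.ofReal) := by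
      have := map_neg Complex.ofRealHom.mapMatrix (ℰ * X)
      rwa [map_mul] at this
    rw [hmul, Algebra.algebraMap_eq_smul_one, mul_sub, mul_smul_comm, mul_one, neg_smul]
    abel
  have hdet (μ : ℂ) : (μ • ℰ.map Complex.ofReal - (-(ℰ * X)).map Complex.ofReal).det = 0 ↔
      -μ ∈ spectrum ℂ (X.map Complex.ofReal) := by
    obtain ⟨u, hu⟩ := isUnit_map_ofReal_iff.mpr hE
    rw [hfactor, spectrum.mem_iff, ← not_iff_not, not_not, ← hu,
      ← Units.isUnit_units_mul u, ← IsUnit.neg_iff, Matrix.isUnit_iff_isUnit_det,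
      isUnit_iff_ne_zero]
  refine ⟨fun h z hz => ?_, fun h μ hμ => ?_⟩
  · simpa using h (-z) ((hdet (-z)).mpr (by simpa using hz))
  · simpa using h (-μ) ((hdet μ).mp hμ)

theorem newton_step_eq_neg_mul_scaledNewton {ν : Seminorm ℝ (Matrix (Fin N) (Fin N) ℝ)} {c : ℝ}
    (hE : IsUnit ℰ) (hc : c = √(ν (-(ℰ * X)) / ν (ℰ * (-(ℰ * X))⁻¹ * ℰ))) :
    (1 / (2 * c)) • -(ℰ * X) + (c / 2) • (ℰ * (-(ℰ * X))⁻¹ * ℰ) =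
      -(ℰ * scaledNewton (ν.comp (LinearMap.mulLeft ℝ ℰ)) X) := by
  have hinv : ℰ * (-(ℰ * X))⁻¹ * ℰ = -(ℰ * X⁻¹ʳ) := by
    have hcancel : (-ℰ)⁻¹ʳ * ℰ = -1 := by
      rw [← neg_inj, ← mul_neg, Ring.inverse_mul_cancel _ hE.neg, neg_neg]
    rw [Matrix.nonsing_inv_eq_ringInverse, ← neg_mul, Ring.inverse_mul (.inl hE.neg), mul_assoc,
      mul_assoc, hcancel, mul_neg_one, mul_neg]
  have hscaling : c = newtonScaling (ν.comp (LinearMap.mulLeft ℝ ℰ)) X := by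
    rw [hc, hinv, map_neg_eq_map, map_neg_eq_map]
    rfl
  rw [hinv, scaledNewton, ← hscaling, mul_add, mul_smul_comm, mul_smul_comm, smul_neg, smul_neg]
  abel

end Pencil

theorem sign_function_iteration_converges_general {N : ℕ}
    (ν : Seminorm ℝ (Matrix (Fin N) (Fin N) ℝ)) (hν : ∀ M, ν M = 0 → M = 0)
    (ℰ 𝒜 : Matrix (Fin N) (Fin N) ℝ)
    (hE : IsUnit ℰ) (hstab : CStablePencil ℰ 𝒜)
    (A : ℕ → Matrix (Fin N) (Fin N) ℝ) (c : ℕ → ℝ)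
    (hA1 : A 1 = 𝒜)
    (hc : ∀ k, 1 ≤ k → c k = √(ν (A k) / ν (ℰ * (A k)⁻¹ * ℰ)))
    (hrec : ∀ k, 1 ≤ k →
      A (k + 1) = (1 / (2 * c k)) • A k + (c k / 2) • (ℰ * (A k)⁻¹ * ℰ)) :
    (∀ k, 1 ≤ k → IsUnit (A k) ∧ CStablePencil ℰ (A k)) ∧ Tendsto A atTop (𝓝 (-ℰ)) := by
  rcases isEmpty_or_nonempty (Fin N) with hN | hN
  · exact ⟨fun _ _ => ⟨isUnit_of_subsingleton _, fun μ hμ => by simp at hμ⟩,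
      by simpa only [Subsingleton.elim A fun _ => -ℰ] using tendsto_const_nhds⟩
  have hdef (M : Matrix (Fin N) (Fin N) ℝ) (hM : ν.comp (LinearMap.mulLeft ℝ ℰ) M = 0) : M = 0 :=
    hE.mul_right_eq_zero.mp (hν _ hM)
  set X : ℕ → Matrix (Fin N) (Fin N) ℝ :=
    fun k => (scaledNewton (ν.comp (LinearMap.mulLeft ℝ ℰ)))^[k] (-(ℰ⁻¹ʳ * 𝒜))
  have hX (k : ℕ) : A (k + 1) = -(ℰ * X k) := by
    induction k with
    | zero => simp [X, hA1, Ring.mul_inverse_cancel_left _ _ hE]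
    | succ k ih =>
      rw [hrec _ (by lia), ih, newton_step_eq_neg_mul_scaledNewton hE (ih ▸ hc (k + 1) (by lia))]
      simp only [X, Function.iterate_succ_apply']
  have hX0 : IsPositiveStable ((X 0).map Complex.ofReal) := by
    rwa [← cStablePencil_neg_mul_iff hE, ← hX, hA1]
  refine ⟨fun k hk => ?_, ?_⟩
  · obtain ⟨k, rfl⟩ := Nat.exists_eq_add_of_le' hk
    have hXk := isPositiveStable_map_iterate_scaledNewton hdef hX0 k
    rw [hX]
    exact ⟨(hE.mul (isUnit_map_ofReal_iff.mp hXk.isUnit)).neg,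
      (cStablePencil_neg_mul_iff hE).mpr hXk⟩
  · rw [← tendsto_add_atTop_iff_nat 1]
    have hlim : Tendsto X atTop (𝓝 1) := tendsto_iterate_scaledNewton_matrix hdef hX0
    simpa [hX] using (hlim.const_mul ℰ).neg

open scoped Matrix.Norms.Frobenius in
/-- The Frobenius norm of square matrices as a bundled seminorm. -/
def frobSeminorm (N : ℕ) : Seminorm ℝ (Matrix (Fin N) (Fin N) ℝ) := normSeminorm ℝ _

open scoped Matrix.Norms.Frobenius in
theorem frobSeminorm_apply {N : ℕ} (M : Matrix (Fin N) (Fin N) ℝ) :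
    frobSeminorm N M = frobNorm M := by
  simp [frobSeminorm, frobNorm, Matrix.frobenius_norm_def, Real.sqrt_eq_rpow]

open scoped Matrix.Norms.Frobenius in
theorem frobSeminorm_definite {N : ℕ} (M : Matrix (Fin N) (Fin N) ℝ) (hM : frobSeminorm N M = 0) :
    M = 0 :=
  norm_eq_zero.mp hM

/-- The scaled Newton sign-function iteration `A₁ = 𝒜`,
`c_k = (‖A_k‖_F / ‖ℰ A_k⁻¹ ℰ‖_F)^{1/2}`,
`A_{k+1} = (1/(2c_k)) A_k + (c_k/2) ℰ A_k⁻¹ ℰ` applied to a c-stable pencil `λℰ − 𝒜`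
with invertible `ℰ` is well defined (every iterate is invertible with `λℰ − A_k`
c-stable) and converges to `−ℰ`. -/
theorem sign_function_iteration_converges {N : ℕ}
    (ℰ 𝒜 : Matrix (Fin N) (Fin N) ℝ)
    (hE : IsUnit ℰ) (hstab : CStablePencil ℰ 𝒜)
    (A : ℕ → Matrix (Fin N) (Fin N) ℝ) (c : ℕ → ℝ)
    (hA1 : A 1 = 𝒜)
    (hc : ∀ k, 1 ≤ k → c k = Real.sqrt (frobNorm (A k) / frobNorm (ℰ * (A k)⁻¹ * ℰ)))
    (hrec : ∀ k, 1 ≤ k →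
      A (k + 1) = (1 / (2 * c k)) • A k + (c k / 2) • (ℰ * (A k)⁻¹ * ℰ)) :
    (∀ k, 1 ≤ k → IsUnit (A k) ∧ CStablePencil ℰ (A k)) ∧
    Tendsto A atTop (nhds (-ℰ)) := by
  simp only [← frobSeminorm_apply] at hc
  exact sign_function_iteration_converges_general (frobSeminorm N) frobSeminorm_definite ℰ 𝒜 hE
    hstab A c hA1 hc hrec
end
end
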